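/- (Remark 4: exact ID capacity region of the three-receiver BC when no receiver is much more capable.) If the three-receiver BC W(y₁,y₂,y₃|x) satisfies, for every PMF P on 𝒳, the inequality 2·max_{k∈{1,2,3}} I(P, W_k) ≤ Σ_{l∈{1,2,3}} I(P, W_l), then its ID capacity region 𝒞₃ equals the set of all rate triples (R₁, R₂, R₃) ∈ [0,∞)³ for which there exists a PMF P on 𝒳 with R_k ≤ I(P, W_k) for all k ∈ {1,2,3}. -/

import Mathlib

open scoped Classical
open Finset

noncomputable section

/-- `P` is a probability mass function on the finite type `X`. -/
def IsPMF {X : Type*} [Fintype X] (P : X → ℝ) : Prop :=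
  (∀ x, 0 ≤ P x) ∧ ∑ x, P x = 1

/-- `W` is a (discrete memoryless) channel from `X` to `Y`. -/
def IsChannel {X Y : Type*} [Fintype Y] (W : X → Y → ℝ) : Prop :=
  (∀ x y, 0 ≤ W x y) ∧ ∀ x, ∑ y, W x y = 1

/-- The `n`-fold memoryless extension `W^n(𝐲|𝐱) = ∏ᵢ W(yᵢ|xᵢ)`. -/
def Wn {X Y : Type*} (W : X → Y → ℝ) (n : ℕ) (x : Fin n → X) (y : Fin n → Y) : ℝ :=
  ∏ i, W (x i) (y i)

/-- Mutual information `I(P,W)` (natural logarithm), with the convention that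
terms with `P x * W x y = 0` contribute `0`. -/
def mutInf {X Y : Type*} [Fintype X] [Fintype Y] (P : X → ℝ) (W : X → Y → ℝ) : ℝ :=
  ∑ x, ∑ y, if P x * W x y = 0 then 0
    else P x * W x y * Real.log (W x y / ∑ x', P x' * W x' y)

/-- The error requirements of an `(n, M, l1, l2)` ID code for the DMC `W`:
maximum probability of missed identification at most `l1`, maximum probability
of wrong identification at most `l2`. -/
def IDCodeErr {X Y M : Type*} [Fintype X] [Fintype Y]
    (n : ℕ) (W : X → Y → ℝ) (Q : M → (Fin n → X) → ℝ)
    (D : M → Finset (Fin n → Y)) (l1 l2 : ℝ) : Prop :=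
  (∀ m, ∑ x, Q m x * ∑ y ∈ (D m)ᶜ, Wn W n x y ≤ l1) ∧
  (∀ m m', m ≠ m' → ∑ x, Q m x * ∑ y ∈ D m', Wn W n x y ≤ l2)

/-- `(n, M, l1, l2)` ID code for the DMC `W`. -/
def IsIDCode {X Y M : Type*} [Fintype X] [Fintype Y]
    (n : ℕ) (W : X → Y → ℝ) (Q : M → (Fin n → X) → ℝ)
    (D : M → Finset (Fin n → Y)) (l1 l2 : ℝ) : Prop :=
  (∀ m, IsPMF (Q m)) ∧ IDCodeErr n W Q D l1 l2

/-- `W` is a three-receiver broadcast channel from `X` to `Y1 × Y2 × Y3`. -/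
def IsBC3 {X Y1 Y2 Y3 : Type*} [Fintype Y1] [Fintype Y2] [Fintype Y3]
    (W : X → Y1 → Y2 → Y3 → ℝ) : Prop :=
  (∀ x y1 y2 y3, 0 ≤ W x y1 y2 y3) ∧ ∀ x, ∑ y1, ∑ y2, ∑ y3, W x y1 y2 y3 = 1

/-- Marginal channel to receiver 1. -/
def marg1 {X Y1 Y2 Y3 : Type*} [Fintype Y2] [Fintype Y3]
    (W : X → Y1 → Y2 → Y3 → ℝ) : X → Y1 → ℝ :=
  fun x y1 => ∑ y2, ∑ y3, W x y1 y2 y3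

/-- Marginal channel to receiver 2. -/
def marg2 {X Y1 Y2 Y3 : Type*} [Fintype Y1] [Fintype Y3]
    (W : X → Y1 → Y2 → Y3 → ℝ) : X → Y2 → ℝ :=
  fun x y2 => ∑ y1, ∑ y3, W x y1 y2 y3

/-- Marginal channel to receiver 3. -/
def marg3 {X Y1 Y2 Y3 : Type*} [Fintype Y1] [Fintype Y2]
    (W : X → Y1 → Y2 → Y3 → ℝ) : X → Y3 → ℝ :=
  fun x y3 => ∑ y1, ∑ y2, W x y1 y2 y3

/-- Average-error ID code for the three-receiver BC: every `Q m1 m2 m3` is a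
PMF on `Xⁿ`, and for each receiver `k` the mixtures (averaging uniformly over
the other two messages) form an ID code for the marginal channel `W_k`. -/
def IsBC3IDCode {X Y1 Y2 Y3 : Type*}
    [Fintype X] [Fintype Y1] [Fintype Y2] [Fintype Y3]
    (n k1 k2 k3 : ℕ) (W : X → Y1 → Y2 → Y3 → ℝ)
    (Q : Fin k1 → Fin k2 → Fin k3 → (Fin n → X) → ℝ)
    (D1 : Fin k1 → Finset (Fin n → Y1))
    (D2 : Fin k2 → Finset (Fin n → Y2))
    (D3 : Fin k3 → Finset (Fin n → Y3))
    (l11 l21 l12 l22 l13 l23 : ℝ) : Prop :=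
  (∀ m1 m2 m3, IsPMF (Q m1 m2 m3)) ∧
  IDCodeErr n (marg1 W)
    (fun m1 x => ((k2 * k3 : ℕ) : ℝ)⁻¹ * ∑ m2, ∑ m3, Q m1 m2 m3 x) D1 l11 l21 ∧
  IDCodeErr n (marg2 W)
    (fun m2 x => ((k1 * k3 : ℕ) : ℝ)⁻¹ * ∑ m1, ∑ m3, Q m1 m2 m3 x) D2 l12 l22 ∧
  IDCodeErr n (marg3 W)
    (fun m3 x => ((k1 * k2 : ℕ) : ℝ)⁻¹ * ∑ m1, ∑ m2, Q m1 m2 m3 x) D3 l13 l23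

/-- A rate triple is achievable for the three-receiver BC `W` under the
average-error criterion. -/
def BC3Achievable {X Y1 Y2 Y3 : Type*}
    [Fintype X] [Fintype Y1] [Fintype Y2] [Fintype Y3]
    (W : X → Y1 → Y2 → Y3 → ℝ) (Rt : ℝ × ℝ × ℝ) : Prop :=
  0 ≤ Rt.1 ∧ 0 ≤ Rt.2.1 ∧ 0 ≤ Rt.2.2 ∧
  ∀ l11 l21 l12 l22 l13 l23 : ℝ,
    0 < l11 → 0 < l21 → 0 < l12 → 0 < l22 → 0 < l13 → 0 < l23 →
    ∃ n₀ : ℕ, ∀ n : ℕ, n₀ ≤ n →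
      ∃ (k1 k2 k3 : ℕ) (Q : Fin k1 → Fin k2 → Fin k3 → (Fin n → X) → ℝ)
        (D1 : Fin k1 → Finset (Fin n → Y1))
        (D2 : Fin k2 → Finset (Fin n → Y2))
        (D3 : Fin k3 → Finset (Fin n → Y3)),
        IsBC3IDCode n k1 k2 k3 W Q D1 D2 D3 l11 l21 l12 l22 l13 l23 ∧
        ((0 < Rt.1 → Rt.1 ≤ (1 / n) * Real.log (Real.log k1)) ∧ (Rt.1 = 0 → k1 = 1)) ∧
        ((0 < Rt.2.1 → Rt.2.1 ≤ (1 / n) * Real.log (Real.log k2)) ∧ (Rt.2.1 = 0 → k2 = 1)) ∧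
        ((0 < Rt.2.2 → Rt.2.2 ≤ (1 / n) * Real.log (Real.log k3)) ∧ (Rt.2.2 = 0 → k3 = 1))

/-!
Converse. Suppose that the messages of one receiver put a fixed fraction of their input mass on
sequences of types `T` with `I(T, W_k) ≤ r`. By soft covering, relative to the sum of the product
output laws of all types, the output law of each such message is nearly that of a codebook of about
`exp (n r)` words; since the decoding sets separate the output laws, distinct messages have distinct
codebooks, so there are hardly more than `exp (exp (n r))` messages. Hence at rate `R_k` less than a
third of the average input mass lies on types with `I(T, W_k) < R_k - ε`. Three such thirds do not
exhaust the mass, so some type `T` serves all three receivers at once; continuity of mutual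
information and compactness of the simplex finish the argument.

Achievability. Draw codewords at random from `P`, indexed by a pool `K ^ α` for a finite field `K`
of size about `exp (n θ)`. A message of receiver `k` is a graph in the pool of a polynomial map
`K ^ d_k → K ^ (α - d_k)`, with `R_k < d_k θ < I(P, W_k)`; a receiver of rate zero uses the whole
pool. Two such graphs meet in few points, so receiver `k` can tell their codewords apart, and the
events that a random graph contains two distinct points are not positively correlated. The encoder
sends a uniformly random codeword from the intersection of the graphs of the three messages. This
intersection has about `|K| ^ (d₁ + d₂ + d₃ - 2 α)` elements by the second moment method, and to
each receiver it looks like its own graph, provided that `2 α < d₁ + d₂ + d₃`. With `d_k θ` close to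
`I(P, W_k)` and `α θ` just above their maximum this is the condition
`2 max_k I(P, W_k) ≤ ∑_l I(P, W_l)`, made strict by a small perturbation.
-/

open Filter Real
open scoped Topology

section FiniteProbability

variable {A : Type*} [Fintype A] {p : A → ℝ}

namespace IsPMF

theorem le_one (hp : IsPMF p) (a : A) : p a ≤ 1 :=
  hp.2 ▸ single_le_sum (fun b _ => hp.1 b) (mem_univ a)

theorem sum_mul_sub_mean (hp : IsPMF p) (f : A → ℝ) :
    ∑ a, p a * (f a - ∑ b, p b * f b) = 0 := by
  simp only [mul_sub, sum_sub_distrib, ← sum_mul, hp.2, one_mul, sub_self]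

theorem variance_le (hp : IsPMF p) (f : A → ℝ) :
    ∑ a, p a * (f a - ∑ b, p b * f b) ^ 2 ≤ ∑ a, p a * f a ^ 2 := by
  set μ := ∑ b, p b * f b with hμ
  have variance_eq : ∑ a, p a * (f a - μ) ^ 2 = ∑ a, p a * f a ^ 2 - μ ^ 2 :=
    calc ∑ a, p a * (f a - μ) ^ 2
        = ∑ a, (p a * f a ^ 2 - 2 * μ * (p a * f a) + μ ^ 2 * p a) :=
          sum_congr rfl fun a _ => by ring
      _ = ∑ a, p a * f a ^ 2 - 2 * μ * μ + μ ^ 2 * 1 := by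
          rw [sum_add_distrib, sum_sub_distrib, ← mul_sum, ← mul_sum, hp.2, hμ]
      _ = ∑ a, p a * f a ^ 2 - μ ^ 2 := by ring
  linarith [sq_nonneg μ]

theorem sum_mul_abs_le_sqrt (hp : IsPMF p) (f : A → ℝ) :
    ∑ a, p a * |f a| ≤ √(∑ a, p a * f a ^ 2) := by
  refine le_sqrt_of_sq_le ?_
  simpa using (even_two.convexOn_pow (𝕜 := ℝ)).map_sum_le (t := univ) (p := fun a => |f a|)
    (fun a _ => hp.1 a) hp.2 fun _ _ => Set.mem_univ _

theorem exists_pos_and_lt_of_sum_lt (hp : IsPMF p) {f : A → ℝ} {r : ℝ}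
    (h : ∑ a, p a * f a < r) : ∃ a, 0 < p a ∧ f a < r := by
  have hr : ∑ a, p a * f a < ∑ a, p a * r := by rwa [← sum_mul, hp.2, one_mul]
  obtain ⟨a, -, ha⟩ := exists_lt_of_sum_lt hr
  refine ⟨a, (hp.1 a).lt_of_ne fun h0 => ?_, lt_of_mul_lt_mul_left ha (hp.1 a)⟩
  simp [← h0] at ha

theorem exists_le_of_sum_le (hp : IsPMF p) {f : A → ℝ} {r : ℝ}
    (h : ∑ a, p a * f a ≤ r) : ∃ a, f a ≤ r := by
  by_contra! hlt
  obtain ⟨a, ha, -⟩ := hp.exists_pos_and_lt_of_sum_lt (f := 0) (r := 1) (by simp)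
  have hr : ∑ a, p a * r < ∑ a, p a * f a :=
    sum_lt_sum (fun a _ => mul_le_mul_of_nonneg_left (hlt a).le (hp.1 a))
      ⟨a, mem_univ a, mul_lt_mul_of_pos_left (hlt a) ha⟩
  rw [← sum_mul, hp.2, one_mul] at hr
  exact hr.not_ge h

end IsPMF

/-- The law `p` conditioned on the event `S`. It takes the junk value `0` if `S` is null. -/
def condOn (p : A → ℝ) (S : Finset A) (a : A) : ℝ :=
  if a ∈ S then p a / ∑ b ∈ S, p b else 0

theorem isPMF_condOn (hp : ∀ a, 0 ≤ p a) {S : Finset A} (hS : 0 < ∑ a ∈ S, p a) :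
    IsPMF (condOn p S) := by
  refine ⟨fun a => ?_, ?_⟩
  · unfold condOn
    split_ifs
    exacts [div_nonneg (hp a) hS.le, le_rfl]
  · simp only [condOn]
    rw [sum_ite_mem, univ_inter, ← sum_div, div_self hS.ne']

theorem condOn_le_div {A : Type*} {p : A → ℝ} (hp : ∀ a, 0 ≤ p a) {S : Finset A} {c : ℝ}
    (hc : 0 < c) (hS : c ≤ ∑ a ∈ S, p a) (a : A) : condOn p S a ≤ p a / c := by
  unfold condOn
  split_ifs
  exacts [div_le_div_of_nonneg_left (hp a) hc hS, div_nonneg (hp a) hc.le]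

theorem mem_of_condOn_ne_zero {A : Type*} {p : A → ℝ} {S : Finset A} {a : A}
    (ha : condOn p S a ≠ 0) : a ∈ S := by
  by_contra h
  exact ha (if_neg h)

theorem sum_union_le_add {A : Type*} [DecidableEq A] {w : A → ℝ} (hw : ∀ a, 0 ≤ w a)
    (S T : Finset A) : ∑ a ∈ S ∪ T, w a ≤ ∑ a ∈ S, w a + ∑ a ∈ T, w a := by
  rw [← sum_union_inter]
  exact le_add_of_nonneg_right (sum_nonneg fun a _ => hw a)

theorem sum_le_card_filter_add_mul {f : A → ℝ} (hf : ∀ a, f a ≤ 1) {t : ℝ} (ht : 0 ≤ t) :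
    ∑ a, f a ≤ #{a | t ≤ f a} + t * Fintype.card A := by
  have hle : ∀ a, f a ≤ (if t ≤ f a then 1 else 0) + t := fun a => by
    split_ifs with h
    exacts [(hf a).trans (le_add_of_nonneg_right ht), by linarith]
  refine (sum_le_sum fun a _ => hle a).trans (le_of_eq ?_)
  rw [sum_add_distrib, natCast_card_filter, sum_const, nsmul_eq_mul, mul_comm t, card_univ]

theorem mul_sum_filter_le_sum_mul {w f : A → ℝ} (hw : ∀ a, 0 ≤ w a) (hf : ∀ a, 0 ≤ f a) (t : ℝ) :
    t * ∑ a with t ≤ f a, w a ≤ ∑ a, w a * f a := by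
  calc t * ∑ a with t ≤ f a, w a ≤ ∑ a with t ≤ f a, w a * f a := by
        rw [mul_sum]
        refine sum_le_sum fun a ha => ?_
        rw [mul_comm]
        exact mul_le_mul_of_nonneg_left (mem_filter.1 ha).2 (hw a)
    _ ≤ ∑ a, w a * f a :=
        sum_le_sum_of_subset_of_nonneg (filter_subset _ _) fun a _ _ => mul_nonneg (hw a) (hf a)

theorem sum_filter_le_abs_le_div_sq {w : A → ℝ} (hw : ∀ a, 0 ≤ w a) (f : A → ℝ) {t : ℝ}
    (ht : 0 < t) : ∑ a with t ≤ |f a|, w a ≤ (∑ a, w a * f a ^ 2) / t ^ 2 := by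
  rw [le_div_iff₀ (pow_pos ht 2), mul_comm]
  have hsq : ∀ a, t ≤ |f a| ↔ t ^ 2 ≤ f a ^ 2 := fun a => by rw [sq_le_sq, abs_of_pos ht]
  simp only [hsq]
  exact mul_sum_filter_le_sum_mul hw (fun a => sq_nonneg (f a)) (t ^ 2)

end FiniteProbability

section IndependentTuples

variable {ι A : Type*} [Fintype ι] [DecidableEq ι] [Fintype A] {p : ι → A → ℝ}

theorem sum_pi_prod_mul_prod (p f : ι → A → ℝ) :
    ∑ c : ι → A, (∏ i, p i (c i)) * ∏ i, f i (c i) = ∏ i, ∑ a, p i a * f i a := by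
  simp only [← prod_mul_distrib, prod_univ_sum, Fintype.piFinset_univ]

theorem IsPMF.pi (hp : ∀ i, IsPMF (p i)) : IsPMF fun c : ι → A => ∏ i, p i (c i) := by
  refine ⟨fun c => prod_nonneg fun i _ => (hp i).1 (c i), ?_⟩
  simpa [fun i => (hp i).2] using sum_pi_prod_mul_prod p 1

theorem sum_pi_prod_mul_apply (hp : ∀ i, IsPMF (p i)) (f : A → ℝ) (i : ι) :
    ∑ c : ι → A, (∏ l, p l (c l)) * f (c i) = ∑ a, p i a * f a := by
  have h := sum_pi_prod_mul_prod p fun l a => if l = i then f a else 1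
  simp only [prod_ite_eq', mem_univ, if_true] at h
  rw [h, prod_eq_single i (fun l _ hl => by simp [hl, (hp l).2]) (by simp)]
  simp

theorem sum_pi_prod_mul_apply_mul_apply (hp : ∀ i, IsPMF (p i)) (f g : A → ℝ) {i j : ι}
    (hij : i ≠ j) :
    ∑ c : ι → A, (∏ l, p l (c l)) * (f (c i) * g (c j))
      = (∑ a, p i a * f a) * ∑ a, p j a * g a := by
  have h := sum_pi_prod_mul_prod p fun l a => (if l = i then f a else 1) * if l = j then g a else 1
  simp only [prod_mul_distrib, prod_ite_eq', mem_univ, if_true] at h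
  rw [h, prod_eq_mul i j hij (fun l _ hl => by simp [hl.1, hl.2, (hp l).2]) (by simp) (by simp)]
  simp [hij, hij.symm]

theorem sum_pi_prod_mul_sum_sq (hp : ∀ i, IsPMF (p i)) (f : ι → A → ℝ)
    (hf : ∀ i, ∑ a, p i a * f i a = 0) :
    ∑ c : ι → A, (∏ l, p l (c l)) * (∑ i, f i (c i)) ^ 2 = ∑ i, ∑ a, p i a * f i a ^ 2 := by
  have hcov : ∀ i j, ∑ c : ι → A, (∏ l, p l (c l)) * (f i (c i) * f j (c j))
      = if i = j then ∑ a, p i a * f i a ^ 2 else 0 := by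
    intro i j
    split_ifs with hij
    · subst hij
      simpa only [sq] using sum_pi_prod_mul_apply hp (fun a => f i a * f i a) i
    · rw [sum_pi_prod_mul_apply_mul_apply hp _ _ hij, hf i, zero_mul]
  calc ∑ c : ι → A, (∏ l, p l (c l)) * (∑ i, f i (c i)) ^ 2
      = ∑ c : ι → A, ∑ i, ∑ j, (∏ l, p l (c l)) * (f i (c i) * f j (c j)) := by
        simp only [sq, sum_mul_sum]
        simp only [mul_sum]
    _ = ∑ i, ∑ j, ∑ c : ι → A, (∏ l, p l (c l)) * (f i (c i) * f j (c j)) := by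
        rw [sum_comm]
        exact sum_congr rfl fun i _ => sum_comm
    _ = ∑ i, ∑ a, p i a * f i a ^ 2 := by simp [hcov]

theorem sum_pi_prod_filter_le_abs_le (hp : ∀ i, IsPMF (p i)) (f : ι → A → ℝ) {t : ℝ} (ht : 0 < t) :
    ∑ c : ι → A with t ≤ |∑ i, f i (c i) - ∑ i, ∑ a, p i a * f i a|, ∏ i, p i (c i)
      ≤ (∑ i, ∑ a, p i a * f i a ^ 2) / t ^ 2 := by
  refine (sum_filter_le_abs_le_div_sq (IsPMF.pi hp).1 _ ht).trans ?_
  gcongr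
  simp only [← sum_sub_distrib]
  rw [sum_pi_prod_mul_sum_sq hp (fun i a => f i a - ∑ b, p i b * f i b) fun i =>
    (hp i).sum_mul_sub_mean (f i)]
  exact sum_le_sum fun i _ => (hp i).variance_le (f i)

end IndependentTuples

section SampleMeans

variable {A : Type*} [Fintype A] {p : A → ℝ} {L : ℕ}

theorem sum_pi_prod_mul_average (hp : IsPMF p) (hL : 0 < L) (f : A → ℝ) :
    ∑ c : Fin L → A, (∏ l, p (c l)) * ((∑ l, f (c l)) / L) = ∑ a, p a * f a := by
  have hL' : (L : ℝ) ≠ 0 := by exact_mod_cast hL.ne'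
  simp only [← mul_div_assoc, ← sum_div, mul_sum]
  rw [sum_comm, sum_congr rfl fun l _ => sum_pi_prod_mul_apply (fun _ => hp) f l]
  simp [hL']

theorem sum_pi_prod_mul_abs_average_sub_le_sqrt (hp : IsPMF p) (hL : 0 < L) (f : A → ℝ) :
    ∑ c : Fin L → A, (∏ l, p (c l)) * |(∑ l, f (c l)) / L - ∑ a, p a * f a|
      ≤ √((∑ a, p a * f a ^ 2) / L) := by
  have hL' : (0 : ℝ) < L := by exact_mod_cast hL
  set μ := ∑ a, p a * f a
  have hcentre : ∀ c : Fin L → A, (∑ l, f (c l)) / L - μ = (∑ l, (f (c l) - μ)) / L := fun c => by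
    simp only [sum_sub_distrib, sum_const, card_univ, Fintype.card_fin, nsmul_eq_mul]
    field_simp
  have hvar := sum_pi_prod_mul_sum_sq (fun _ : Fin L => hp) (fun _ a => f a - μ) fun _ =>
    hp.sum_mul_sub_mean f
  refine ((IsPMF.pi fun _ => hp).sum_mul_abs_le_sqrt _).trans (sqrt_le_sqrt ?_)
  calc ∑ c : Fin L → A, (∏ l, p (c l)) * ((∑ l, f (c l)) / L - μ) ^ 2
      = (∑ a, p a * (f a - μ) ^ 2) / L := by
        simp only [hcentre, div_pow, ← mul_div_assoc, ← sum_div]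
        rw [hvar, sum_const, card_univ, Fintype.card_fin, nsmul_eq_mul]
        field_simp
    _ ≤ (∑ a, p a * f a ^ 2) / L := div_le_div_of_nonneg_right (hp.variance_le f) hL'.le

theorem sum_pi_prod_mul_abs_average_sub_le_two_mul (hp : IsPMF p) (hL : 0 < L) {f : A → ℝ}
    (hf : ∀ a, 0 ≤ f a) :
    ∑ c : Fin L → A, (∏ l, p (c l)) * |(∑ l, f (c l)) / L - ∑ a, p a * f a|
      ≤ 2 * ∑ a, p a * f a := by
  have hμ : 0 ≤ ∑ a, p a * f a := sum_nonneg fun a _ => mul_nonneg (hp.1 a) (hf a)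
  have hw := IsPMF.pi fun _ : Fin L => hp
  have htri : ∀ c : Fin L → A, |(∑ l, f (c l)) / L - ∑ a, p a * f a|
      ≤ (∑ l, f (c l)) / L + ∑ a, p a * f a := fun c => by
    have havg : 0 ≤ (∑ l, f (c l)) / (L : ℝ) :=
      div_nonneg (sum_nonneg fun l _ => hf _) L.cast_nonneg
    exact (abs_sub _ _).trans_eq (by rw [abs_of_nonneg havg, abs_of_nonneg hμ])
  refine (sum_le_sum fun c _ => mul_le_mul_of_nonneg_left (htri c) (hw.1 c)).trans_eq ?_
  simp only [mul_add, sum_add_distrib]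
  rw [sum_pi_prod_mul_average hp hL f, ← sum_mul, hw.2]
  ring

/-- Truncation: the values below `s` are controlled by their variance, at most `s` times the mean,
and those above only by their mean. -/
theorem sum_pi_prod_mul_abs_average_sub_le (hp : IsPMF p) (hL : 0 < L) {f : A → ℝ}
    (hf : ∀ a, 0 ≤ f a) {s : ℝ} (hs : 0 ≤ s) :
    ∑ c : Fin L → A, (∏ l, p (c l)) * |(∑ l, f (c l)) / L - ∑ a, p a * f a|
      ≤ √(s * (∑ a, p a * f a) / L) + 2 * ∑ a with s < f a, p a * f a := by
  set g : A → ℝ := fun a => if s < f a then 0 else f a with hg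
  set b : A → ℝ := fun a => if s < f a then f a else 0 with hb
  have hgb : ∀ a, f a = g a + b a := fun a => by simp only [hg, hb]; split_ifs <;> simp
  have hb0 : ∀ a, 0 ≤ b a := fun a => by simp only [hb]; split_ifs; exacts [hf a, le_rfl]
  have hg2 : ∑ a, p a * g a ^ 2 ≤ s * ∑ a, p a * f a := by
    rw [mul_sum]
    refine sum_le_sum fun a _ => ?_
    rw [mul_left_comm]
    refine mul_le_mul_of_nonneg_left ?_ (hp.1 a)
    simp only [hg]
    split_ifs with h
    · simpa using mul_nonneg hs (hf a)
    · rw [sq]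
      exact mul_le_mul_of_nonneg_right (not_lt.1 h) (hf a)
  have hbsum : ∑ a, p a * b a = ∑ a with s < f a, p a * f a := by
    simp only [hb, mul_ite, mul_zero, sum_filter]
  have htri : ∀ c : Fin L → A, |(∑ l, f (c l)) / L - ∑ a, p a * f a|
      ≤ |(∑ l, g (c l)) / L - ∑ a, p a * g a| + |(∑ l, b (c l)) / L - ∑ a, p a * b a| := fun c => by
    refine (congrArg abs ?_).trans_le (abs_add_le _ _)
    simp only [hgb, mul_add, sum_add_distrib]
    ring
  calc ∑ c : Fin L → A, (∏ l, p (c l)) * |(∑ l, f (c l)) / L - ∑ a, p a * f a|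
      ≤ ∑ c : Fin L → A, (∏ l, p (c l)) * |(∑ l, g (c l)) / L - ∑ a, p a * g a|
        + ∑ c : Fin L → A, (∏ l, p (c l)) * |(∑ l, b (c l)) / L - ∑ a, p a * b a| := by
        rw [← sum_add_distrib]
        simp only [← mul_add]
        exact sum_le_sum fun c _ =>
          mul_le_mul_of_nonneg_left (htri c) ((IsPMF.pi fun _ => hp).1 c)
    _ ≤ √((∑ a, p a * g a ^ 2) / L) + 2 * ∑ a, p a * b a :=
        add_le_add (sum_pi_prod_mul_abs_average_sub_le_sqrt hp hL g)
          (sum_pi_prod_mul_abs_average_sub_le_two_mul hp hL hb0)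
    _ ≤ √(s * (∑ a, p a * f a) / L) + 2 * ∑ a with s < f a, p a * f a := by
        rw [hbsum]
        gcongr

end SampleMeans

section OutputLaw

variable {X Y : Type*} [Fintype X] {P : X → ℝ} {W : X → Y → ℝ}

/-- The output law `PW` of the channel `W` under the input law `P`. -/
def outLaw (P : X → ℝ) (W : X → Y → ℝ) (y : Y) : ℝ :=
  ∑ x, P x * W x y

theorem mul_le_outLaw (hP : ∀ x, 0 ≤ P x) (hW : ∀ x y, 0 ≤ W x y) (x : X) (y : Y) :
    P x * W x y ≤ outLaw P W y :=
  single_le_sum (f := fun x => P x * W x y) (fun x _ => mul_nonneg (hP x) (hW x y)) (mem_univ x)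

theorem sum_outLaw (P : X → ℝ) (W : X → Y → ℝ) (S : Finset Y) :
    ∑ y ∈ S, outLaw P W y = ∑ x, P x * ∑ y ∈ S, W x y := by
  simp only [outLaw, mul_sum]
  exact sum_comm

variable [Fintype Y]

theorem IsPMF.outLaw (hP : IsPMF P) (hW : IsChannel W) : IsPMF (outLaw P W) := by
  refine ⟨fun y => sum_nonneg fun x _ => mul_nonneg (hP.1 x) (hW.1 x y), ?_⟩
  simp only [sum_outLaw, hW.2, mul_one, hP.2]

theorem IsChannel.isPMF {X : Type*} {W : X → Y → ℝ} (hW : IsChannel W) (x : X) : IsPMF (W x) :=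
  ⟨hW.1 x, hW.2 x⟩

theorem IsChannel.Wn {X : Type*} {W : X → Y → ℝ} (hW : IsChannel W) (n : ℕ) :
    IsChannel (Wn W n) :=
  ⟨fun x => (IsPMF.pi fun i => hW.isPMF (x i)).1, fun x => (IsPMF.pi fun i => hW.isPMF (x i)).2⟩

end OutputLaw

section Marginals

variable {X Y1 Y2 Y3 : Type*} [Fintype Y1] [Fintype Y2] [Fintype Y3] {W : X → Y1 → Y2 → Y3 → ℝ}

theorem IsBC3.isChannel_marg1 (hW : IsBC3 W) : IsChannel (marg1 W) :=
  ⟨fun x _ => sum_nonneg fun _ _ => sum_nonneg fun _ _ => hW.1 x _ _ _, hW.2⟩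

theorem IsBC3.isChannel_marg2 (hW : IsBC3 W) : IsChannel (marg2 W) :=
  ⟨fun x _ => sum_nonneg fun _ _ => sum_nonneg fun _ _ => hW.1 x _ _ _,
    fun x => sum_comm.trans (hW.2 x)⟩

theorem IsBC3.isChannel_marg3 (hW : IsBC3 W) : IsChannel (marg3 W) :=
  ⟨fun x _ => sum_nonneg fun _ _ => sum_nonneg fun _ _ => hW.1 x _ _ _,
    fun x => sum_comm.trans <| (sum_congr rfl fun _ _ => sum_comm).trans (hW.2 x)⟩

end Marginals

section MutualInformation

variable {X Y : Type*} [Fintype X] {P : X → ℝ} {W : X → Y → ℝ}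

/-- The information density `i(x; y)` of the channel `W` under the input law `P`. It takes the junk
value `0` where `W x y = 0`. -/
def infDensity (P : X → ℝ) (W : X → Y → ℝ) (x : X) (y : Y) : ℝ :=
  log (W x y / outLaw P W y)

theorem exp_sum_infDensity_mul_prod_outLaw (hP : ∀ x, 0 ≤ P x) (hW : ∀ x y, 0 ≤ W x y) {n : ℕ}
    {x : Fin n → X} {y : Fin n → Y} (hx : ∀ i, 0 < P (x i)) (hy : ∀ i, 0 < W (x i) (y i)) :
    exp (∑ i, infDensity P W (x i) (y i)) * ∏ i, outLaw P W (y i) = Wn W n x y := by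
  have hout : ∀ i, 0 < outLaw P W (y i) := fun i =>
    (mul_pos (hx i) (hy i)).trans_le (mul_le_outLaw hP hW _ _)
  rw [exp_sum, ← prod_mul_distrib]
  refine prod_congr rfl fun i _ => ?_
  rw [infDensity, exp_log (div_pos (hy i) (hout i)), div_mul_cancel₀ _ (hout i).ne']

theorem lt_sum_infDensity (hP : ∀ x, 0 ≤ P x) (hW : ∀ x y, 0 ≤ W x y) {n : ℕ} {x : Fin n → X}
    {y : Fin n → Y} (hx : ∀ i, 0 < P (x i)) {s : ℝ}
    (h : exp s * ∏ i, outLaw P W (y i) < Wn W n x y) :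
    s < ∑ i, infDensity P W (x i) (y i) := by
  have hout : 0 ≤ ∏ i, outLaw P W (y i) := prod_nonneg fun i _ =>
    sum_nonneg fun a _ => mul_nonneg (hP a) (hW a _)
  have hWn : 0 < Wn W n x y := (mul_nonneg (exp_nonneg _) hout).trans_lt h
  have hy : ∀ i, 0 < W (x i) (y i) := fun i =>
    (hW _ _).lt_of_ne fun h0 => hWn.ne' (prod_eq_zero (mem_univ i) h0.symm)
  rw [← exp_sum_infDensity_mul_prod_outLaw hP hW hx hy] at h
  exact exp_lt_exp.1 (lt_of_mul_lt_mul_right h hout)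

variable [Fintype Y]

theorem mutInf_eq_sum_infDensity (P : X → ℝ) (W : X → Y → ℝ) :
    mutInf P W = ∑ x, P x * ∑ y, W x y * infDensity P W x y := by
  simp only [mutInf, infDensity, outLaw, mul_sum]
  refine sum_congr rfl fun x _ => sum_congr rfl fun y _ => ?_
  split_ifs with h
  · rw [← mul_assoc, h, zero_mul]
  · rw [mul_assoc]

theorem mutInf_eq_sum_negMulLog (hP : IsPMF P) (hW : IsChannel W) :
    mutInf P W = ∑ y, (negMulLog (outLaw P W y) - ∑ x, P x * negMulLog (W x y)) := by
  have hterm : ∀ x y, P x * (W x y * infDensity P W x y)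
      = P x * W x y * (-log (outLaw P W y)) - P x * negMulLog (W x y) := by
    intro x y
    by_cases h0 : P x * W x y = 0
    · rcases mul_eq_zero.1 h0 with h1 | h1 <;> simp [h1]
    · have hpos : 0 < P x * W x y := (mul_nonneg (hP.1 x) (hW.1 x y)).lt_of_ne' h0
      have hout : 0 < outLaw P W y := hpos.trans_le (mul_le_outLaw hP.1 hW.1 x y)
      rw [infDensity, log_div (right_ne_zero_of_mul h0) hout.ne', negMulLog]
      ring
  simp only [mutInf_eq_sum_infDensity, mul_sum, hterm]
  rw [sum_comm]
  refine sum_congr rfl fun y _ => ?_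
  rw [sum_sub_distrib, ← sum_mul, negMulLog, outLaw, mul_neg, neg_mul]

theorem mutInf_nonneg (hP : IsPMF P) (hW : IsChannel W) : 0 ≤ mutInf P W := by
  rw [mutInf_eq_sum_negMulLog hP hW]
  refine sum_nonneg fun y _ => sub_nonneg.2 ?_
  simpa only [smul_eq_mul, outLaw] using concaveOn_negMulLog.le_map_sum (t := univ)
    (p := fun x => W x y) (fun x _ => hP.1 x) hP.2 fun x _ => hW.1 x y

theorem continuousOn_mutInf (hW : IsChannel W) :
    ContinuousOn (fun P => mutInf P W) {P : X → ℝ | IsPMF P} := by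
  have hcont : Continuous fun P : X → ℝ =>
      ∑ y, (negMulLog (outLaw P W y) - ∑ x, P x * negMulLog (W x y)) := by
    unfold outLaw
    exact continuous_finsetSum _ fun y _ =>
      (continuous_negMulLog.comp (by fun_prop)).sub (by fun_prop)
  exact hcont.continuousOn.congr fun P hP => mutInf_eq_sum_negMulLog hP hW

theorem isCompact_setOf_isPMF (X : Type*) [Fintype X] : IsCompact {P : X → ℝ | IsPMF P} :=
  isCompact_stdSimplex ℝ X

theorem mul_log_sq_le_four {t : ℝ} (h0 : 0 ≤ t) (h1 : t ≤ 1) : t * log t ^ 2 ≤ 4 := by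
  rcases h0.eq_or_lt with rfl | h0
  · simp
  have hsqrt : (log √t * √t) ^ 2 ≤ 1 := by
    rw [← sq_abs]
    exact pow_le_one₀ (abs_nonneg _) (abs_log_mul_self_lt _ (sqrt_pos.2 h0) (sqrt_le_one.2 h1)).le
  rw [log_sqrt h0.le, mul_pow, sq_sqrt h0.le] at hsqrt
  linarith

theorem infDensity_mem_Icc (hP : IsPMF P) (hW : IsChannel W) {x : X} {y : Y} (hx : 0 < P x)
    (hy : 0 < W x y) : infDensity P W x y ∈ Set.Icc (log (W x y)) (-log (P x)) := by
  have hle : P x * W x y ≤ outLaw P W y := mul_le_outLaw hP.1 hW.1 x y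
  have hpos : 0 < outLaw P W y := (mul_pos hx hy).trans_le hle
  constructor
  · refine log_le_log hy ((le_div_iff₀ hpos).2 ?_)
    exact mul_le_of_le_one_right hy.le ((hP.outLaw hW).le_one y)
  · rw [← log_inv]
    refine log_le_log (div_pos hy hpos) ((div_le_iff₀ hpos).2 ?_)
    rwa [inv_mul_eq_div, le_div_iff₀ hx, mul_comm]

theorem mul_mul_infDensity_sq_le (hP : IsPMF P) (hW : IsChannel W) (x : X) (y : Y) :
    P x * (W x y * infDensity P W x y ^ 2) ≤ 8 := by
  rcases (hP.1 x).eq_or_lt with h | hx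
  · simp [← h]
  rcases (hW.1 x y).eq_or_lt with h | hy
  · simp [← h]
  have hx1 := hP.le_one x
  have hy1 := (hW.isPMF x).le_one y
  obtain ⟨hlow, hupp⟩ := infDensity_mem_Icc hP hW hx hy
  have hsq : infDensity P W x y ^ 2 ≤ log (P x) ^ 2 + log (W x y) ^ 2 := by
    rcases le_total 0 (infDensity P W x y) with h | h
    · nlinarith [sq_nonneg (log (W x y))]
    · nlinarith [sq_nonneg (log (P x)), log_nonpos hy.le hy1]
  calc P x * (W x y * infDensity P W x y ^ 2)
      ≤ P x * (W x y * (log (P x) ^ 2 + log (W x y) ^ 2)) := by gcongr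
    _ = W x y * (P x * log (P x) ^ 2) + P x * (W x y * log (W x y) ^ 2) := by ring
    _ ≤ 1 * 4 + 1 * 4 := by
        gcongr
        · exact mul_log_sq_le_four hx.le hx1
        · exact mul_log_sq_le_four hy.le hy1
    _ = 8 := by norm_num

theorem sum_mul_infDensity_sq_le (hP : IsPMF P) (hW : IsChannel W) :
    ∑ x, P x * ∑ y, W x y * infDensity P W x y ^ 2 ≤ 8 * (Fintype.card X * Fintype.card Y) :=
  calc ∑ x, P x * ∑ y, W x y * infDensity P W x y ^ 2
      ≤ ∑ _x : X, ∑ _y : Y, (8 : ℝ) := by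
        simp only [mul_sum]
        exact sum_le_sum fun x _ => sum_le_sum fun y _ => mul_mul_infDensity_sq_le hP hW x y
    _ = 8 * (Fintype.card X * Fintype.card Y) := by
        simp only [sum_const, card_univ, nsmul_eq_mul]
        ring

end MutualInformation

section SoftCovering

/-- The expected `L¹` distance of a random codebook is at most the right-hand side, by the mean
deviation bound for each output separately. -/
theorem exists_sum_abs_average_sub_outLaw_le {A C : Type*} [Fintype A] [Fintype C] {q : A → ℝ}
    (hq : IsPMF q) {V : A → C → ℝ} (hV : IsChannel V) {θ : ℝ} (hθ : 0 ≤ θ) {L : ℕ} (hL : 0 < L) :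
    ∃ c : Fin L → A, ∑ y, |(∑ l, V (c l) y) / L - outLaw q V y|
      ≤ √(θ / L) + 2 * ∑ x, q x * ∑ y with θ * outLaw q V y < V x y, V x y := by
  have hout := hq.outLaw hV
  refine (IsPMF.pi fun _ : Fin L => hq).exists_le_of_sum_le ?_
  have hmean : ∀ y, ∑ c : Fin L → A, (∏ l, q (c l)) * |(∑ l, V (c l) y) / L - outLaw q V y|
      ≤ √(θ / L) * outLaw q V y + 2 * ∑ x with θ * outLaw q V y < V x y, q x * V x y := by
    intro y
    have hsqrt : √(θ * outLaw q V y * outLaw q V y / L) = √(θ / L) * outLaw q V y := by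
      rw [show θ * outLaw q V y * outLaw q V y / L = θ / L * outLaw q V y ^ 2 by ring,
        sqrt_mul (by positivity), sqrt_sq (hout.1 y)]
    rw [← hsqrt]
    exact sum_pi_prod_mul_abs_average_sub_le hq hL (fun x => hV.1 x y) (mul_nonneg hθ (hout.1 y))
  calc ∑ c : Fin L → A, (∏ l, q (c l)) * ∑ y, |(∑ l, V (c l) y) / L - outLaw q V y|
      = ∑ y, ∑ c : Fin L → A, (∏ l, q (c l)) * |(∑ l, V (c l) y) / L - outLaw q V y| := by
        simp only [mul_sum]
        exact sum_comm
    _ ≤ ∑ y, (√(θ / L) * outLaw q V y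
          + 2 * ∑ x with θ * outLaw q V y < V x y, q x * V x y) := sum_le_sum fun y _ => hmean y
    _ = √(θ / L) + 2 * ∑ x, q x * ∑ y with θ * outLaw q V y < V x y, V x y := by
        rw [sum_add_distrib, ← mul_sum, ← mul_sum, hout.2, mul_one]
        simp only [mul_sum, sum_filter, mul_ite, mul_zero]
        rw [sum_comm]

/-- Splitting at `outLaw q V y < κ * ρ y` lets an arbitrary measure `ρ` replace the output law. -/
theorem sum_mul_sum_filter_outLaw_lt_le {A C : Type*} [Fintype A] [Fintype C] {q : A → ℝ}
    (hq : ∀ x, 0 ≤ q x) {V : A → C → ℝ} (hV : ∀ x y, 0 ≤ V x y) {ρ : C → ℝ} (hρ : ∀ y, 0 ≤ ρ y)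
    {θ κ : ℝ} (hθ : 0 ≤ θ) (hκ : 0 ≤ κ) :
    ∑ x, q x * ∑ y with θ * outLaw q V y < V x y, V x y
      ≤ κ * ∑ y, ρ y + ∑ x, q x * ∑ y with θ * (κ * ρ y) < V x y, V x y := by
  have hsplit : ∀ x, ∑ y with θ * outLaw q V y < V x y, V x y
      ≤ ∑ y with outLaw q V y < κ * ρ y, V x y + ∑ y with θ * (κ * ρ y) < V x y, V x y := by
    intro x
    rw [← sum_union_inter]
    refine (sum_le_sum_of_subset_of_nonneg (fun y hy => ?_) fun y _ _ => hV x y).trans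
      (le_add_of_nonneg_right (sum_nonneg fun y _ => hV x y))
    simp only [mem_union, mem_filter_univ] at hy ⊢
    rcases lt_or_ge (outLaw q V y) (κ * ρ y) with hlt | hge
    exacts [Or.inl hlt, Or.inr ((mul_le_mul_of_nonneg_left hge hθ).trans_lt hy)]
  have hrare : ∑ x, q x * ∑ y with outLaw q V y < κ * ρ y, V x y ≤ κ * ∑ y, ρ y :=
    calc ∑ x, q x * ∑ y with outLaw q V y < κ * ρ y, V x y
        = ∑ y with outLaw q V y < κ * ρ y, outLaw q V y := (sum_outLaw q V _).symm
      _ ≤ ∑ y with outLaw q V y < κ * ρ y, κ * ρ y :=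
          sum_le_sum fun y hy => ((mem_filter_univ y).1 hy).le
      _ ≤ ∑ y, κ * ρ y := sum_le_sum_of_subset_of_nonneg (subset_univ _)
          fun y _ _ => mul_nonneg hκ (hρ y)
      _ = κ * ∑ y, ρ y := (mul_sum ..).symm
  calc ∑ x, q x * ∑ y with θ * outLaw q V y < V x y, V x y
      ≤ ∑ x, q x * (∑ y with outLaw q V y < κ * ρ y, V x y
          + ∑ y with θ * (κ * ρ y) < V x y, V x y) :=
        sum_le_sum fun x _ => mul_le_mul_of_nonneg_left (hsplit x) (hq x)
    _ ≤ κ * ∑ y, ρ y + ∑ x, q x * ∑ y with θ * (κ * ρ y) < V x y, V x y := by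
        simp only [mul_add, sum_add_distrib]
        gcongr

end SoftCovering

section Types

variable {X Y : Type*} {n : ℕ}

/-- The empirical distribution (type) of a sequence. -/
def empType (x : Fin n → X) (a : X) : ℝ := (#{i | x i = a} : ℝ) / n

theorem empType_apply_pos (x : Fin n → X) (i : Fin n) : 0 < empType x (x i) := by
  have hcount : 0 < #{j | x j = x i} := card_pos.2 ⟨i, by simp⟩
  have hn : 0 < n := i.pos
  unfold empType
  positivity

variable [Fintype X]

theorem sum_apply_eq_mul_sum_empType (hn : 0 < n) (x : Fin n → X) (f : X → ℝ) :
    ∑ i, f (x i) = n * ∑ a, empType x a * f a := by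
  have hn' : (n : ℝ) ≠ 0 := by exact_mod_cast hn.ne'
  have hfiber : ∀ a, ∑ i with x i = a, f (x i) = n * (empType x a * f a) := fun a => by
    rw [sum_congr rfl fun i hi => congrArg f (mem_filter.1 hi).2, sum_const, nsmul_eq_mul, empType]
    field_simp
  rw [mul_sum, ← sum_fiberwise _ x, sum_congr rfl fun a _ => hfiber a]

theorem isPMF_empType (hn : 0 < n) (x : Fin n → X) : IsPMF (empType x) := by
  have hn' : (n : ℝ) ≠ 0 := by exact_mod_cast hn.ne'
  refine ⟨fun a => by unfold empType; positivity, ?_⟩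
  simpa [hn'] using (sum_apply_eq_mul_sum_empType hn x fun _ => 1).symm

theorem card_image_empType_le (X : Type*) [Fintype X] (n : ℕ) :
    #(univ.image (empType : (Fin n → X) → X → ℝ)) ≤ (n + 1) ^ Fintype.card X := by
  let count : (Fin n → X) → X → Fin (n + 1) := fun x a =>
    ⟨#{i | x i = a}, Nat.lt_succ_of_le ((card_le_univ _).trans (by simp))⟩
  have hfactor : (empType : (Fin n → X) → X → ℝ)
      = (fun (c : X → Fin (n + 1)) a => ((c a : ℕ) : ℝ) / n) ∘ count := rfl
  rw [hfactor, ← image_image]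
  exact card_image_le.trans ((card_le_univ _).trans (by simp))

/-- The sum, over all types `T` of length-`n` input sequences, of the product laws `(TW)ⁿ`. It has
total mass polynomial in `n` and serves as a universal reference measure on output sequences. -/
def typeMixture (W : X → Y → ℝ) (n : ℕ) (y : Fin n → Y) : ℝ :=
  ∑ T ∈ univ.image (empType : (Fin n → X) → X → ℝ), ∏ i, outLaw T W (y i)

variable [Fintype Y] {W : X → Y → ℝ}

theorem isPMF_outLaw_empType (hW : IsChannel W) (hn : 0 < n) {T : X → ℝ}
    (hT : T ∈ univ.image (empType : (Fin n → X) → X → ℝ)) :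
    IsPMF fun y : Fin n → Y => ∏ i, outLaw T W (y i) := by
  obtain ⟨x, -, rfl⟩ := mem_image.1 hT
  exact IsPMF.pi fun _ => (isPMF_empType hn x).outLaw hW

theorem prod_outLaw_empType_le_typeMixture (hW : IsChannel W) (hn : 0 < n) (x : Fin n → X)
    (y : Fin n → Y) : ∏ i, outLaw (empType x) W (y i) ≤ typeMixture W n y :=
  single_le_sum (f := fun T => ∏ i, outLaw T W (y i))
    (fun _ hT => (isPMF_outLaw_empType hW hn hT).1 y) (mem_image_of_mem _ (mem_univ x))

theorem typeMixture_nonneg (hW : IsChannel W) (hn : 0 < n) (y : Fin n → Y) :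
    0 ≤ typeMixture W n y :=
  sum_nonneg fun _ hT => (isPMF_outLaw_empType hW hn hT).1 y

theorem sum_typeMixture_le (hW : IsChannel W) (hn : 0 < n) :
    ∑ y, typeMixture W n y ≤ (n + 1) ^ Fintype.card X := by
  simp only [typeMixture]
  rw [sum_comm, sum_congr rfl fun T hT => (isPMF_outLaw_empType hW hn hT).2]
  simpa using mod_cast card_image_empType_le X n

/-- The sum of the information densities of the letters has mean `n * mutInf (empType x) W`, so this
is Chebyshev's inequality. -/
theorem sum_Wn_filter_exp_mul_prod_outLaw_lt_le (hW : IsChannel W) (hn : 0 < n) (x : Fin n → X)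
    {t : ℝ} (ht : 0 < t) :
    ∑ y with exp (n * mutInf (empType x) W + t) * ∏ i, outLaw (empType x) W (y i) < Wn W n x y,
      Wn W n x y ≤ 8 * (Fintype.card X * Fintype.card Y) * n / t ^ 2 := by
  set T := empType x
  have hT : IsPMF T := isPMF_empType hn x
  have hmean : ∑ i, ∑ y, W (x i) y * infDensity T W (x i) y = n * mutInf T W := by
    rw [mutInf_eq_sum_infDensity]
    exact sum_apply_eq_mul_sum_empType hn x fun a => ∑ y, W a y * infDensity T W a y
  have hsecond : ∑ i, ∑ y, W (x i) y * infDensity T W (x i) y ^ 2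
      ≤ 8 * (Fintype.card X * Fintype.card Y) * n := by
    rw [sum_apply_eq_mul_sum_empType hn x fun a => ∑ y, W a y * infDensity T W a y ^ 2, mul_comm]
    gcongr
    exact sum_mul_infDensity_sq_le hT hW
  have hlog : ∀ y, exp (n * mutInf T W + t) * ∏ i, outLaw T W (y i) < Wn W n x y →
      t ≤ |∑ i, infDensity T W (x i) (y i) - ∑ i, ∑ y, W (x i) y * infDensity T W (x i) y| := by
    intro y hy
    have hsum := lt_sum_infDensity hT.1 hW.1 (empType_apply_pos x) hy
    rw [hmean]
    exact (le_sub_iff_add_le'.2 hsum.le).trans (le_abs_self _)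
  calc ∑ y with exp (n * mutInf T W + t) * ∏ i, outLaw T W (y i) < Wn W n x y, Wn W n x y
      ≤ ∑ y : Fin n → Y with t ≤ |∑ i, infDensity T W (x i) (y i)
          - ∑ i, ∑ y, W (x i) y * infDensity T W (x i) y|, ∏ i, W (x i) (y i) :=
        sum_le_sum_of_subset_of_nonneg (monotone_filter_right _ fun y _ => hlog y)
          fun y _ _ => (hW.Wn n).1 x y
    _ ≤ (∑ i, ∑ y, W (x i) y * infDensity T W (x i) y ^ 2) / t ^ 2 :=
        sum_pi_prod_filter_le_abs_le (fun i => hW.isPMF (x i)) (fun i => infDensity T W (x i)) ht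
    _ ≤ 8 * (Fintype.card X * Fintype.card Y) * n / t ^ 2 := by gcongr

theorem sum_mul_sum_Wn_filter_outLaw_lt_le (hW : IsChannel W) (hn : 0 < n) {q : (Fin n → X) → ℝ}
    (hq : IsPMF q) {r : ℝ} (hr : ∀ x, q x ≠ 0 → mutInf (empType x) W ≤ r) {t s : ℝ} (ht : 0 < t)
    (hs : 0 < s) :
    ∑ x, q x * ∑ y with ((n + 1) ^ Fintype.card X * exp (n * r + t) / s)
        * outLaw q (Wn W n) y < Wn W n x y, Wn W n x y
      ≤ s + 8 * (Fintype.card X * Fintype.card Y) * n / t ^ 2 := by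
  set K : ℝ := (n + 1) ^ Fintype.card X
  have hK : 0 < K := by positivity
  have hWn := hW.Wn n
  have hexceed : ∀ x, q x * ∑ y with (K * exp (n * r + t) / s) * (s / K * typeMixture W n y)
        < Wn W n x y, Wn W n x y
      ≤ q x * (8 * (Fintype.card X * Fintype.card Y) * n / t ^ 2) := by
    intro x
    rcases eq_or_ne (q x) 0 with hx | hx
    · simp [hx]
    refine mul_le_mul_of_nonneg_left (le_trans (sum_le_sum_of_subset_of_nonneg
      (monotone_filter_right _ fun y _ hy => lt_of_le_of_lt ?_ hy) fun y _ _ => hWn.1 x y)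
      (sum_Wn_filter_exp_mul_prod_outLaw_lt_le hW hn x ht)) (hq.1 x)
    calc exp (n * mutInf (empType x) W + t) * ∏ i, outLaw (empType x) W (y i)
        ≤ exp (n * r + t) * typeMixture W n y := by
          have hmix := prod_outLaw_empType_le_typeMixture hW hn x y
          have hprod := (isPMF_outLaw_empType hW hn (mem_image_of_mem _ (mem_univ x))).1 y
          have := hr x hx
          gcongr
      _ = (K * exp (n * r + t) / s) * (s / K * typeMixture W n y) := by field_simp
  calc ∑ x, q x * ∑ y with (K * exp (n * r + t) / s) * outLaw q (Wn W n) y < Wn W n x y, Wn W n x y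
      ≤ s / K * ∑ y, typeMixture W n y + ∑ x, q x * ∑ y with (K * exp (n * r + t) / s)
          * (s / K * typeMixture W n y) < Wn W n x y, Wn W n x y :=
        sum_mul_sum_filter_outLaw_lt_le hq.1 hWn.1 (typeMixture_nonneg hW hn) (by positivity)
          (by positivity)
    _ ≤ s / K * K + ∑ x, q x * (8 * (Fintype.card X * Fintype.card Y) * n / t ^ 2) := by
        exact add_le_add (by gcongr; exact sum_typeMixture_le hW hn)
          (sum_le_sum fun x _ => hexceed x)
    _ = s + 8 * (Fintype.card X * Fintype.card Y) * n / t ^ 2 := by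
        rw [← sum_mul, hq.2, one_mul, div_mul_cancel₀ s hK.ne']

end Types

section IDConverse

/-- Two messages covered by the same codeword would have output laws at distance at most `2 * η`,
which is too close for the decoding sets to tell them apart. -/
theorem injective_of_forall_sum_abs_sub_le {M A C : Type*} [Fintype C] [DecidableEq C]
    {p : M → C → ℝ}
    (hp : ∀ m, IsPMF (p m)) {D : M → Finset C} {l₁ l₂ η : ℝ}
    (hmiss : ∀ m, ∑ y ∈ (D m)ᶜ, p m y ≤ l₁) (hfalse : ∀ m m', m ≠ m' → ∑ y ∈ D m', p m y ≤ l₂)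
    {f : A → C → ℝ} {c : M → A} (hcover : ∀ m, ∑ y, |f (c m) y - p m y| ≤ η)
    (hη : l₁ + l₂ + 2 * η < 1) : Function.Injective c := by
  intro m m' hmm
  by_contra hne
  have htotal : ∑ y ∈ D m', p m' y + ∑ y ∈ (D m')ᶜ, p m' y = 1 := by
    rw [sum_add_sum_compl, (hp m').2]
  have hclose : ∑ y ∈ D m', p m' y - ∑ y ∈ D m', p m y ≤ 2 * η :=
    calc ∑ y ∈ D m', p m' y - ∑ y ∈ D m', p m y
        ≤ ∑ y ∈ D m', (|f (c m) y - p m y| + |f (c m') y - p m' y|) := by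
          rw [← sum_sub_distrib]
          refine sum_le_sum fun y _ => ?_
          rw [hmm]
          linarith [le_abs_self (f (c m') y - p m y), neg_abs_le (f (c m') y - p m' y)]
      _ ≤ ∑ y, (|f (c m) y - p m y| + |f (c m') y - p m' y|) :=
          sum_le_sum_of_subset_of_nonneg (subset_univ _) fun y _ _ => by positivity
      _ ≤ 2 * η := by
          rw [sum_add_distrib]
          linarith [hcover m, hcover m']
  linarith [hmiss m', hfalse m m' hne]

variable {X Y M : Type*} [Fintype X] [Fintype Y] {W : X → Y → ℝ} {n : ℕ}
  {Q : M → (Fin n → X) → ℝ} {D : M → Finset (Fin n → Y)} {l₁ l₂ : ℝ}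

theorem exists_codebook_of_mutInf_empType_le (hW : IsChannel W) (hn : 0 < n) {q : (Fin n → X) → ℝ}
    (hq : IsPMF q) {r δ : ℝ} (hδ : 0 < δ) (hr : ∀ x, q x ≠ 0 → mutInf (empType x) W ≤ r)
    (hnδ : 160 * (Fintype.card X * Fintype.card Y) ≤ n * δ ^ 2) {L : ℕ}
    (hL : 8000 * (n + 1) ^ Fintype.card X * exp (n * (r + δ)) ≤ L) :
    ∃ c : Fin L → Fin n → X,
      ∑ y, |(∑ l, Wn W n (c l) y) / L - outLaw q (Wn W n) y| ≤ 1 / 4 := by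
  have hn' : (0 : ℝ) < n := by exact_mod_cast hn
  have hLpos : (0 : ℝ) < L := lt_of_lt_of_le (by positivity) hL
  obtain ⟨c, hc⟩ := exists_sum_abs_average_sub_outLaw_le hq (hW.Wn n) (L := L)
    (θ := (n + 1) ^ Fintype.card X * exp (n * r + n * δ) / (1 / 20)) (by positivity)
    (by exact_mod_cast hLpos)
  have hexceed := sum_mul_sum_Wn_filter_outLaw_lt_le hW hn hq hr (mul_pos hn' hδ)
    (show (0 : ℝ) < 1 / 20 by norm_num)
  have hsqrt : √((n + 1) ^ Fintype.card X * exp (n * r + n * δ) / (1 / 20) / L) ≤ 1 / 20 := by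
    rw [sqrt_le_left (by norm_num), div_le_iff₀ hLpos, ← mul_add]
    linarith
  have htail : 8 * (Fintype.card X * Fintype.card Y) * n / (n * δ) ^ 2 ≤ (1 / 20 : ℝ) := by
    rw [div_le_iff₀ (by positivity)]
    nlinarith
  exact ⟨c, by linarith⟩

namespace IDCodeErr

protected theorem condOn (hD : IDCodeErr n W Q D l₁ l₂) (hW : IsChannel W) (hQ : ∀ m x, 0 ≤ Q m x)
    {S : Finset (Fin n → X)} {c : ℝ} (hc : 0 < c) (hS : ∀ m, c ≤ ∑ x ∈ S, Q m x) :
    IDCodeErr n W (fun m => condOn (Q m) S) D (l₁ / c) (l₂ / c) := by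
  have hle : ∀ m (B : Finset (Fin n → Y)), ∑ x, condOn (Q m) S x * ∑ y ∈ B, Wn W n x y
      ≤ (∑ x, Q m x * ∑ y ∈ B, Wn W n x y) / c := by
    intro m B
    rw [sum_div]
    refine sum_le_sum fun x _ => ?_
    rw [mul_div_right_comm]
    exact mul_le_mul_of_nonneg_right (condOn_le_div (hQ m) hc (hS m) x)
      (sum_nonneg fun y _ => (hW.Wn n).1 x y)
  exact ⟨fun m => (hle m _).trans (by gcongr; exact hD.1 m),
    fun m m' hm => (hle m _).trans (by gcongr; exact hD.2 m m' hm)⟩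

theorem comp_injective (hD : IDCodeErr n W Q D l₁ l₂) {N : Type*} {g : N → M}
    (hg : Function.Injective g) :
    IDCodeErr n W (fun m => Q (g m)) (fun m => D (g m)) l₁ l₂ :=
  ⟨fun m => hD.1 (g m), fun _ _ hm => hD.2 _ _ (hg.ne hm)⟩

/-- A codebook of size `L ≈ exp (n * (r + δ))` covers each message, and the messages are told apart
by their codebooks, of which there are `card X ^ (n * L)`. -/
theorem log_card_le [Fintype M] [Nonempty M] (hD : IDCodeErr n W Q D (1 / 10) (1 / 10))
    (hW : IsChannel W) (hn : 0 < n) (hQ : ∀ m, IsPMF (Q m)) {r δ : ℝ} (hδ : 0 < δ)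
    (hr : ∀ m x, Q m x ≠ 0 → mutInf (empType x) W ≤ r)
    (hnδ : 160 * (Fintype.card X * Fintype.card Y) ≤ n * δ ^ 2) :
    log (Fintype.card M) ≤ n * log (Fintype.card X)
      * (8000 * (n + 1) ^ Fintype.card X * exp (n * (r + δ)) + 1) := by
  obtain ⟨L, hL, hL'⟩ : ∃ L : ℕ, 8000 * (n + 1) ^ Fintype.card X * exp (n * (r + δ)) ≤ L ∧
      (L : ℝ) ≤ 8000 * (n + 1) ^ Fintype.card X * exp (n * (r + δ)) + 1 :=
    ⟨_, Nat.le_ceil _, (Nat.ceil_lt_add_one (by positivity)).le⟩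
  choose c hc using fun m => exists_codebook_of_mutInf_empType_le hW hn (hQ m) hδ (hr m) hnδ hL
  have hinj : Function.Injective c := injective_of_forall_sum_abs_sub_le
    (f := fun (c : Fin L → Fin n → X) y => (∑ l, Wn W n (c l) y) / L)
    (fun m => (hQ m).outLaw (hW.Wn n)) (fun m => (sum_outLaw _ _ _).trans_le (hD.1 m))
    (fun m m' hm => (sum_outLaw _ _ _).trans_le (hD.2 m m' hm)) hc (by norm_num)
  have hcard : (Fintype.card M : ℝ) ≤ Fintype.card (Fin L → Fin n → X) := by
    exact_mod_cast Fintype.card_le_of_injective c hinj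
  calc log (Fintype.card M) ≤ log (Fintype.card (Fin L → Fin n → X)) :=
        log_le_log (by exact_mod_cast Fintype.card_pos) hcard
    _ = n * log (Fintype.card X) * L := by
        simp only [Fintype.card_pi_const, Nat.cast_pow, log_pow]
        ring
    _ ≤ _ := by
        have := log_natCast_nonneg (Fintype.card X)
        gcongr

/-- Only messages that send a fixed fraction of their mass to `S` are kept, and their laws are
conditioned on `S`. -/
theorem log_card_le_of_le_sum [Fintype M] [Nonempty M]
    (hD : IDCodeErr n W Q D (1 / 60) (1 / 60)) (hW : IsChannel W) (hn : 0 < n)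
    (hQ : ∀ m, IsPMF (Q m)) {S : Finset (Fin n → X)}
    (hS : Fintype.card M * (1 / 3) ≤ ∑ m, ∑ x ∈ S, Q m x) {r δ : ℝ} (hδ : 0 < δ)
    (hr : ∀ x ∈ S, mutInf (empType x) W ≤ r)
    (hnδ : 160 * (Fintype.card X * Fintype.card Y) ≤ n * δ ^ 2) :
    log (Fintype.card M) ≤ 6 + n * log (Fintype.card X)
      * (8000 * (n + 1) ^ Fintype.card X * exp (n * (r + δ)) + 1) := by
  have hsum_le : ∀ m, ∑ x ∈ S, Q m x ≤ 1 := fun m => (hQ m).2 ▸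
    sum_le_sum_of_subset_of_nonneg (subset_univ S) fun x _ _ => (hQ m).1 x
  let N := {m // 1 / 6 ≤ ∑ x ∈ S, Q m x}
  have hM : (0 : ℝ) < Fintype.card M := by exact_mod_cast Fintype.card_pos
  have hcard : (Fintype.card M : ℝ) ≤ 6 * Fintype.card N := by
    have hmarkov := hS.trans (sum_le_card_filter_add_mul hsum_le (t := 1 / 6) (by norm_num))
    rw [Fintype.card_subtype]
    linarith
  have hN : (0 : ℝ) < Fintype.card N := by linarith
  have : Nonempty N := Fintype.card_pos_iff.1 (by exact_mod_cast hN)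
  have hNS : ∀ m : N, 1 / 6 ≤ ∑ x ∈ S, Q m x := fun m => m.2
  have hcond := (hD.comp_injective (g := fun m : N => (m : M)) Subtype.val_injective).condOn hW
    (fun m => (hQ m).1) (c := 1 / 6) (by norm_num) hNS
  rw [show (1 / 60 / (1 / 6) : ℝ) = 1 / 10 by norm_num] at hcond
  have hlogN := hcond.log_card_le hW hn
    (fun m => isPMF_condOn (hQ m).1 (lt_of_lt_of_le (by norm_num) (hNS m))) hδ
    (fun m x hx => hr x (mem_of_condOn_ne_zero hx)) hnδ
  have hlogM : log (Fintype.card M) ≤ log 6 + log (Fintype.card N) := by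
    rw [← log_mul (by norm_num) hN.ne']
    exact log_le_log hM hcard
  linarith [log_le_sub_one_of_pos (show (0 : ℝ) < 6 by norm_num)]

end IDCodeErr

end IDConverse

section LowTypes

theorem tendsto_add_one_pow_mul_exp_neg_mul (k : ℕ) {c : ℝ} (hc : 0 < c) :
    Tendsto (fun n : ℕ => ((n : ℝ) + 1) ^ k * exp (-(c * n))) atTop (𝓝 0) := by
  have hlin : Tendsto (fun n : ℕ => c * ((n : ℝ) + 1)) atTop atTop :=
    (tendsto_atTop_add_const_right _ 1 tendsto_natCast_atTop_atTop).const_mul_atTop hc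
  have hlim := ((tendsto_pow_mul_exp_neg_atTop_nhds_zero k).comp hlin).const_mul (exp c / c ^ k)
  rw [mul_zero] at hlim
  refine hlim.congr fun n => ?_
  simp only [Function.comp]
  rw [mul_pow, show -(c * (n : ℝ)) = c + -(c * (n + 1)) by ring, exp_add]
  field_simp

theorem eventually_add_mul_exp_lt_exp {a p : ℝ} (hp : 0 < p) (hap : a < p) {b c : ℝ} (hb : 0 ≤ b)
    (hc : 0 ≤ c) (e : ℝ) (d : ℕ) :
    ∀ᶠ n : ℕ in atTop, e + n * c * (b * (n + 1) ^ d * exp (n * a) + 1) < exp (n * p) := by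
  have hlim := ((tendsto_add_one_pow_mul_exp_neg_mul 0 hp).const_mul e).add
    (((tendsto_add_one_pow_mul_exp_neg_mul (d + 1) (sub_pos.2 hap)).const_mul (c * b)).add
      ((tendsto_add_one_pow_mul_exp_neg_mul 1 hp).const_mul c))
  simp only [mul_zero, add_zero] at hlim
  filter_upwards [hlim.eventually_lt_const one_pos] with n hn
  have hsplit : exp (-((p - a) * n)) = exp (n * a) * exp (-(p * n)) := by
    rw [← exp_add]
    ring_nf
  have hcancel : exp (-(p * n)) * exp (n * p) = 1 := by
    rw [← exp_add, mul_comm p, neg_add_cancel, exp_zero]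
  rw [← mul_lt_mul_iff_of_pos_right (exp_pos (-(p * n))), mul_comm (exp (n * p)), hcancel]
  refine lt_of_le_of_lt ?_ hn
  calc (e + n * c * (b * (n + 1) ^ d * exp (n * a) + 1)) * exp (-(p * n))
      = e * (((n : ℝ) + 1) ^ 0 * exp (-(p * n)))
        + (c * b * ((n + 1) ^ d * n * exp (-((p - a) * n))) + c * (n * exp (-(p * n)))) := by
        rw [hsplit]
        ring
    _ ≤ e * (((n : ℝ) + 1) ^ 0 * exp (-(p * n)))
        + (c * b * ((n + 1) ^ (d + 1) * exp (-((p - a) * n)))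
          + c * ((n + 1) ^ 1 * exp (-(p * n)))) := by
        have hn1 : (n : ℝ) ≤ n + 1 := by linarith
        rw [pow_succ, pow_one]
        gcongr

/-- The rate condition of `BC3Achievable`: `k` messages at block length `n` attain the
identification rate `R`, where rate zero stands for a single message. -/
def AttainsIDRate (n k : ℕ) (R : ℝ) : Prop :=
  (0 < R → R ≤ (1 / n) * log (log k)) ∧ (R = 0 → k = 1)

namespace AttainsIDRate

variable {n k : ℕ} {R : ℝ}

theorem exp_le_log (h : AttainsIDRate n k R) (hn : 0 < n) (hR : 0 < R) :
    exp (n * R) ≤ log k := by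
  have hn' : (0 : ℝ) < n := by exact_mod_cast hn
  have hloglog : n * R ≤ log (log k) := by
    have hrate := h.1 hR
    rwa [one_div, inv_mul_eq_div, le_div_iff₀' hn'] at hrate
  have hlog : 0 < log k := by
    refine (log_natCast_nonneg k).lt_of_ne fun h0 => ?_
    rw [← h0, log_zero] at hloglog
    exact hloglog.not_gt (mul_pos hn' hR)
  rwa [← le_log_iff_exp_le hlog]

theorem pos (h : AttainsIDRate n k R) (hn : 0 < n) (hR : 0 ≤ R) : 0 < k := by
  rcases hR.eq_or_lt with hR | hR
  · simp [h.2 hR.symm]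
  · refine Nat.pos_of_ne_zero fun hk => ?_
    have hexp := h.exp_le_log hn hR
    simp only [hk, CharP.cast_eq_zero, log_zero] at hexp
    exact hexp.not_gt (exp_pos _)

end AttainsIDRate

theorem eventually_sum_low_type_lt {X Y : Type*} [Fintype X] [Fintype Y] {W : X → Y → ℝ}
    (hW : IsChannel W) {R ε : ℝ} (hR : 0 ≤ R) (hε : 0 < ε) :
    ∀ᶠ n in atTop, ∀ (k : ℕ) (Q : Fin k → (Fin n → X) → ℝ) (D : Fin k → Finset (Fin n → Y)),
      (∀ m, IsPMF (Q m)) → IDCodeErr n W Q D (1 / 60) (1 / 60) → AttainsIDRate n k R →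
      ∑ m, ∑ x with mutInf (empType x) W < R - ε, Q m x < k * (1 / 3) := by
  rcases hR.eq_or_lt with rfl | hR
  · filter_upwards [eventually_gt_atTop 0] with n hn k _ _ _ _ hk
    have hempty : ∀ x : Fin n → X, ¬ mutInf (empType x) W < 0 - ε := fun x =>
      not_lt.2 (by linarith [mutInf_nonneg (isPMF_empType hn x) hW])
    simp only [hempty, filter_false, sum_empty, sum_const_zero, hk.2 rfl]
    norm_num
  have hlinear : Tendsto (fun n : ℕ => (n : ℝ) * (ε / 4) ^ 2) atTop atTop :=
    tendsto_natCast_atTop_atTop.atTop_mul_const (by positivity)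
  filter_upwards [eventually_gt_atTop 0, hlinear.eventually_ge_atTop _,
    eventually_add_mul_exp_lt_exp hR (show R - ε + ε / 4 < R by linarith) (b := 8000)
      (by norm_num) (log_natCast_nonneg (Fintype.card X)) 6 (Fintype.card X)]
    with n hn hvar hexp k Q D hQ hD hk
  by_contra! hmass
  have : Nonempty (Fin k) := ⟨⟨0, hk.pos hn hR.le⟩⟩
  have hlog := hD.log_card_le_of_le_sum hW hn hQ (by rwa [Fintype.card_fin])
    (show 0 < ε / 4 by positivity) (r := R - ε) (S := {x | mutInf (empType x) W < R - ε})
    (fun x hx => ((mem_filter_univ x).1 hx).le) hvar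
  rw [Fintype.card_fin] at hlog
  exact ((hk.exp_le_log hn hR).trans hlog).not_gt hexp

end LowTypes

section BroadcastConverse

theorem isPMF_average {A : Type*} [Fintype A] {a b : ℕ} (ha : 0 < a) (hb : 0 < b)
    {Q : Fin a → Fin b → A → ℝ} (hQ : ∀ i j, IsPMF (Q i j)) :
    IsPMF fun x => ((a * b : ℕ) : ℝ)⁻¹ * ∑ i, ∑ j, Q i j x := by
  refine ⟨fun x => mul_nonneg (by positivity) (sum_nonneg fun i _ =>
    sum_nonneg fun j _ => (hQ i j).1 x), ?_⟩
  have htotal : ∑ x, ∑ i, ∑ j, Q i j x = (a * b : ℕ) := by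
    rw [sum_comm, sum_congr rfl fun i _ => sum_comm]
    simp [(hQ _ _).2]
  have hab : ((a * b : ℕ) : ℝ) ≠ 0 := by positivity
  rw [← mul_sum, htotal, inv_mul_cancel₀ hab]

theorem sum_average_lt_mul_iff {A : Type*} {a b k : ℕ} (ha : 0 < a) (hb : 0 < b)
    {Q : Fin k → Fin a → Fin b → A → ℝ} {E : Finset A} {c : ℝ} :
    ∑ m, ∑ x ∈ E, ((a * b : ℕ) : ℝ)⁻¹ * ∑ i, ∑ j, Q m i j x < k * c ↔
      ∑ x ∈ E, ∑ m, ∑ i, ∑ j, Q m i j x < k * a * b * c := by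
  have hab : (0 : ℝ) < (a * b : ℕ) := by positivity
  rw [sum_comm]
  simp only [← mul_sum]
  rw [inv_mul_lt_iff₀ hab]
  push_cast
  ring_nf

theorem exists_notMem_of_sum_lt {A : Type*} [Fintype A] {w : A → ℝ} (hw : ∀ a, 0 ≤ w a)
    {S T U : Finset A} (h : ∑ a ∈ S, w a + ∑ a ∈ T, w a + ∑ a ∈ U, w a < ∑ a, w a) :
    ∃ a, a ∉ S ∧ a ∉ T ∧ a ∉ U := by
  by_contra! hcover
  have huniv : S ∪ T ∪ U = univ := eq_univ_of_forall fun a => by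
    simp only [mem_union]
    by_cases hS : a ∈ S <;> by_cases hT : a ∈ T <;> simp_all
  have := sum_union_le_add hw (S ∪ T) U
  rw [huniv] at this
  linarith [sum_union_le_add hw S T]

/-- Under the uniform mixture of all encoders, each receiver rules out at most a third of the mass
as being of too low type, so some input sequence has a type that suits all three of them. -/
theorem BC3Achievable.exists_mutInf_ge {X Y1 Y2 Y3 : Type*} [Fintype X] [Fintype Y1] [Fintype Y2]
    [Fintype Y3] {W : X → Y1 → Y2 → Y3 → ℝ} (hW : IsBC3 W) {R : ℝ × ℝ × ℝ}
    (hR : BC3Achievable W R) {ε : ℝ} (hε : 0 < ε) :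
    ∃ P : X → ℝ, IsPMF P ∧ R.1 - ε ≤ mutInf P (marg1 W) ∧ R.2.1 - ε ≤ mutInf P (marg2 W) ∧
      R.2.2 - ε ≤ mutInf P (marg3 W) := by
  obtain ⟨h1, h2, h3, hcodes⟩ := hR
  have hl : (0 : ℝ) < 1 / 60 := by norm_num
  obtain ⟨n, hcode, hlow1, hlow2, hlow3, hn⟩ :=
    ((eventually_atTop.2 (hcodes _ _ _ _ _ _ hl hl hl hl hl hl)).and
      ((eventually_sum_low_type_lt hW.isChannel_marg1 h1 hε).and
      ((eventually_sum_low_type_lt hW.isChannel_marg2 h2 hε).and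
      ((eventually_sum_low_type_lt hW.isChannel_marg3 h3 hε).and
      (eventually_gt_atTop 0))))).exists
  obtain ⟨k1, k2, k3, Q, D1, D2, D3, ⟨hQ, e1, e2, e3⟩, r1, r2, r3⟩ := hcode
  have p1 := AttainsIDRate.pos r1 hn h1
  have p2 := AttainsIDRate.pos r2 hn h2
  have p3 := AttainsIDRate.pos r3 hn h3
  have b1 := (sum_average_lt_mul_iff p2 p3).1 (hlow1 k1 _ D1
    (fun m1 => isPMF_average p2 p3 (hQ m1)) e1 r1)
  have b2 := (sum_average_lt_mul_iff p1 p3).1 (hlow2 k2 _ D2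
    (fun m2 => isPMF_average p1 p3 fun m1 m3 => hQ m1 m2 m3) e2 r2)
  have b3 := (sum_average_lt_mul_iff p1 p2).1 (hlow3 k3 _ D3
    (fun m3 => isPMF_average p1 p2 fun m1 m2 => hQ m1 m2 m3) e3 r3)
  set S : (Fin n → X) → ℝ := fun x => ∑ m1, ∑ m2, ∑ m3, Q m1 m2 m3 x
  have hS2 : ∀ x, ∑ m2, ∑ m1, ∑ m3, Q m1 m2 m3 x = S x := fun x => sum_comm
  have hS3 : ∀ x, ∑ m3, ∑ m1, ∑ m2, Q m1 m2 m3 x = S x := fun x =>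
    sum_comm.trans (sum_congr rfl fun _ _ => sum_comm)
  simp only [hS2] at b2
  simp only [hS3] at b3
  have htotal : ∑ x, S x = k1 * k2 * k3 := by
    rw [sum_comm, sum_congr rfl fun _ _ => sum_comm, sum_congr rfl fun _ _ => sum_congr rfl
      fun _ _ => sum_comm]
    simp [(hQ _ _ _).2, mul_assoc]
  have hnonneg : ∀ x, 0 ≤ S x := fun x =>
    sum_nonneg fun _ _ => sum_nonneg fun _ _ => sum_nonneg fun _ _ => (hQ _ _ _).1 x
  obtain ⟨x, hx1, hx2, hx3⟩ := exists_notMem_of_sum_lt hnonneg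
    ((add_lt_add (add_lt_add b1 b2) b3).trans_eq (by rw [htotal]; ring))
  simp only [mem_filter_univ, not_lt] at hx1 hx2 hx3
  exact ⟨empType x, isPMF_empType hn x, hx1, hx2, hx3⟩

end BroadcastConverse

section UniformLaw

variable {V : Type*} [Fintype V]

/-- The uniform law on `S`, or on the whole space if `S` is empty. -/
def unifOn (S : Finset V) (v : V) : ℝ :=
  if S.Nonempty then if v ∈ S then (#S : ℝ)⁻¹ else 0 else (Fintype.card V : ℝ)⁻¹

theorem sum_unifOn_mul {S : Finset V} (hS : S.Nonempty) (h : V → ℝ) :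
    ∑ v, unifOn S v * h v = (#S : ℝ)⁻¹ * ∑ v ∈ S, h v := by
  simp only [unifOn, hS, if_true, ite_mul, zero_mul, sum_ite_mem, univ_inter, mul_sum]

theorem isPMF_unifOn [Nonempty V] (S : Finset V) : IsPMF (unifOn S) := by
  by_cases hS : S.Nonempty
  · refine ⟨fun _ => ?_, ?_⟩
    · simp only [unifOn, hS, if_true]
      split_ifs <;> positivity
    · have hcard : (#S : ℝ) ≠ 0 := mod_cast hS.card_pos.ne'
      simpa only [mul_one, sum_const, nsmul_eq_mul, inv_mul_cancel₀ hcard]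
        using sum_unifOn_mul hS fun _ => 1
  · simp only [IsPMF, unifOn, hS, if_false]
    exact ⟨fun _ => by positivity, by simp⟩

/-- Chebyshev: the second term exceeds `1` as soon as `#S` drops below `N / 2`. -/
theorem sum_unifOn_mul_le [Nonempty V] (S : Finset V) {h : V → ℝ} (h0 : ∀ v, 0 ≤ h v)
    (h1 : ∀ v, h v ≤ 1) {N : ℝ} (hN : 0 < N) :
    ∑ v, unifOn S v * h v ≤ 2 / N * ∑ v ∈ S, h v + 4 / N ^ 2 * (#S - N) ^ 2 := by
  have hsum : 0 ≤ ∑ v ∈ S, h v := sum_nonneg fun v _ => h0 v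
  rcases le_or_gt (N / 2) #S with hlarge | hsmall
  · have hpos : (0 : ℝ) < #S := (half_pos hN).trans_le hlarge
    rw [sum_unifOn_mul (card_pos.1 (mod_cast hpos))]
    have hinv : (#S : ℝ)⁻¹ ≤ 2 / N := by
      rwa [inv_le_comm₀ hpos (by positivity), inv_div]
    exact (mul_le_mul_of_nonneg_right hinv hsum).trans (le_add_of_nonneg_right (by positivity))
  · have hle_one : ∑ v, unifOn S v * h v ≤ 1 := by
      rw [← (isPMF_unifOn S).2]
      exact sum_le_sum fun v _ => mul_le_of_le_one_right ((isPMF_unifOn S).1 v) (h1 v)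
    have hone_le : 1 ≤ 4 / N ^ 2 * (#S - N) ^ 2 := by
      rw [div_mul_eq_mul_div, le_div_iff₀ (by positivity)]
      nlinarith
    exact hle_one.trans (hone_le.trans (le_add_of_nonneg_left (by positivity)))

end UniformLaw

section Designs

variable {V M M' : Type*} [Fintype M] [Fintype M'] {B : M → Finset V} {B' : M' → Finset V}
  {ρ ρ' : ℝ}

/-- A family of subsets of `V` such that a uniformly random member contains every point with
probability `ρ` and every pair of points with probability at most `ρ ^ 2`. -/
structure IsPairwiseSampler (B : M → Finset V) (ρ : ℝ) : Prop where
  pos : 0 < ρ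
  card_mem : ∀ v, (#{m | v ∈ B m} : ℝ) = ρ * Fintype.card M
  card_mem_mem : ∀ v v', v ≠ v' → (#{m | v ∈ B m ∧ v' ∈ B m} : ℝ) ≤ ρ ^ 2 * Fintype.card M

/-- A pairwise sampler all of whose members have relative size `ρ`. -/
structure IsPairwiseDesign [Fintype V] (B : M → Finset V) (ρ : ℝ) : Prop
    extends IsPairwiseSampler B ρ where
  card_eq : ∀ m, (#(B m) : ℝ) = ρ * Fintype.card V

theorem IsPairwiseDesign.nonempty [Fintype V] [Nonempty V] (hB : IsPairwiseDesign B ρ) (m : M) :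
    (B m).Nonempty := by
  have hcard : (0 : ℝ) < #(B m) := by
    rw [hB.card_eq]
    exact mul_pos hB.pos (mod_cast Fintype.card_pos)
  exact card_pos.1 (mod_cast hcard)

namespace IsPairwiseSampler

theorem inter (hB : IsPairwiseSampler B ρ) (hB' : IsPairwiseSampler B' ρ') :
    IsPairwiseSampler (fun m : M × M' => B m.1 ∩ B' m.2) (ρ * ρ') where
  pos := mul_pos hB.pos hB'.pos
  card_mem v := by
    simp only [mem_inter]
    rw [← univ_product_univ, filter_product (v ∈ B ·) (v ∈ B' ·), card_product, Nat.cast_mul,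
      hB.card_mem, hB'.card_mem, Fintype.card_prod, Nat.cast_mul]
    ring
  card_mem_mem v v' hne := by
    have := hB.pos
    simp only [mem_inter, and_and_and_comm]
    rw [← univ_product_univ, filter_product (fun m => v ∈ B m ∧ v' ∈ B m)
      (fun m => v ∈ B' m ∧ v' ∈ B' m), card_product, Nat.cast_mul, Fintype.card_prod, Nat.cast_mul]
    calc (#{m | v ∈ B m ∧ v' ∈ B m} : ℝ) * #{m | v ∈ B' m ∧ v' ∈ B' m}
        ≤ ρ ^ 2 * Fintype.card M * (ρ' ^ 2 * Fintype.card M') := by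
          gcongr
          exacts [hB.card_mem_mem v v' hne, hB'.card_mem_mem v v' hne]
      _ = (ρ * ρ') ^ 2 * (Fintype.card M * Fintype.card M') := by ring

theorem sum_sum_inter (hB : IsPairwiseSampler B ρ) (S : Finset V) (h : V → ℝ) :
    ∑ m, ∑ v ∈ S ∩ B m, h v = Fintype.card M * (ρ * ∑ v ∈ S, h v) := by
  simp only [← sum_ite_mem]
  rw [sum_comm, mul_left_comm, ← mul_assoc, mul_sum]
  refine sum_congr rfl fun v _ => ?_
  rw [← sum_filter, sum_const, nsmul_eq_mul, hB.card_mem]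

theorem sum_card_inter_sq_le (hB : IsPairwiseSampler B ρ) (S : Finset V) :
    ∑ m, (#(S ∩ B m) : ℝ) ^ 2 ≤ Fintype.card M * (ρ * #S + (ρ * #S) ^ 2) := by
  have hsq : ∀ m, (#(S ∩ B m) : ℝ) ^ 2
      = ∑ v ∈ S, ∑ w ∈ S, if v ∈ B m ∧ w ∈ B m then 1 else 0 := by
    intro m
    rw [card_eq_sum_ones, Nat.cast_sum, ← sum_ite_mem, sq, sum_mul_sum]
    simp only [Nat.cast_one, ite_and, mul_ite, mul_one, mul_zero]
    refine sum_congr rfl fun v _ => sum_congr rfl fun w _ => ?_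
    split_ifs <;> rfl
  have hpair : ∀ v w, (#{m | v ∈ B m ∧ w ∈ B m} : ℝ)
      ≤ (if v = w then ρ * Fintype.card M else 0) + ρ ^ 2 * Fintype.card M := by
    intro v w
    split_ifs with hvw
    · subst hvw
      simp only [and_self, hB.card_mem]
      exact le_add_of_nonneg_right (by positivity)
    · rw [zero_add]
      exact hB.card_mem_mem v w hvw
  calc ∑ m, (#(S ∩ B m) : ℝ) ^ 2
      = ∑ v ∈ S, ∑ w ∈ S, (#{m | v ∈ B m ∧ w ∈ B m} : ℝ) := by
        simp only [hsq, natCast_card_filter]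
        rw [sum_comm]
        exact sum_congr rfl fun v _ => sum_comm
    _ ≤ ∑ v ∈ S, ∑ w ∈ S,
          ((if v = w then ρ * Fintype.card M else 0) + ρ ^ 2 * Fintype.card M) :=
        sum_le_sum fun v _ => sum_le_sum fun w _ => hpair v w
    _ = Fintype.card M * (ρ * #S + (ρ * #S) ^ 2) := by
        simp only [sum_add_distrib, sum_ite_eq, sum_ite_mem, inter_self, sum_const, nsmul_eq_mul]
        ring

theorem sum_card_inter_sub_sq_le (hB : IsPairwiseSampler B ρ) (S : Finset V) :
    ∑ m, ((#(S ∩ B m) : ℝ) - ρ * #S) ^ 2 ≤ Fintype.card M * (ρ * #S) := by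
  have hmean : ∑ m, (#(S ∩ B m) : ℝ) = Fintype.card M * (ρ * #S) := by
    simpa only [sum_const, nsmul_eq_mul, mul_one] using hB.sum_sum_inter S fun _ => 1
  simp only [sub_sq, sum_add_distrib, sum_sub_distrib, ← sum_mul, ← mul_sum, hmean, sum_const,
    card_univ, nsmul_eq_mul]
  linarith [hB.sum_card_inter_sq_le S]

theorem sum_unifOn_inter_le [Fintype V] [Nonempty V] (hB : IsPairwiseSampler B ρ)
    {S : Finset V} (hS : S.Nonempty) {h : V → ℝ} (h0 : ∀ v, 0 ≤ h v) (h1 : ∀ v, h v ≤ 1) {δ : ℝ}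
    (hδ : ∑ v ∈ S, h v ≤ δ * #S) :
    ∑ m, ∑ v, unifOn (S ∩ B m) v * h v ≤ Fintype.card M * (2 * δ + 4 / (ρ * #S)) := by
  have hρ := hB.pos
  have : (0 : ℝ) < #S := mod_cast hS.card_pos
  calc ∑ m, ∑ v, unifOn (S ∩ B m) v * h v
      ≤ ∑ m, (2 / (ρ * #S) * ∑ v ∈ S ∩ B m, h v
          + 4 / (ρ * #S) ^ 2 * (#(S ∩ B m) - ρ * #S) ^ 2) :=
        sum_le_sum fun m _ => sum_unifOn_mul_le _ h0 h1 (by positivity)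
    _ = 2 / (ρ * #S) * (Fintype.card M * (ρ * ∑ v ∈ S, h v))
          + 4 / (ρ * #S) ^ 2 * ∑ m, ((#(S ∩ B m) : ℝ) - ρ * #S) ^ 2 := by
        rw [sum_add_distrib, ← mul_sum, ← mul_sum, hB.sum_sum_inter]
    _ ≤ 2 / (ρ * #S) * (Fintype.card M * (ρ * (δ * #S)))
          + 4 / (ρ * #S) ^ 2 * (Fintype.card M * (ρ * #S)) := by
        gcongr
        exact hB.sum_card_inter_sub_sq_le S
    _ = Fintype.card M * (2 * δ + 4 / (ρ * #S)) := by field_simp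

end IsPairwiseSampler

end Designs

section PushLaw

variable {V A : Type*} [Fintype V]

/-- The image of the law `q` under `c`. -/
def pushLaw (c : V → A) (q : V → ℝ) (x : A) : ℝ :=
  ∑ v with c v = x, q v

variable [Fintype A]

theorem sum_pushLaw_mul (c : V → A) (q : V → ℝ) (f : A → ℝ) :
    ∑ x, pushLaw c q x * f x = ∑ v, q v * f (c v) := by
  rw [← sum_fiberwise univ c]
  refine sum_congr rfl fun x _ => ?_
  rw [pushLaw, sum_mul]
  exact sum_congr rfl fun v hv => by rw [(mem_filter.1 hv).2]

theorem IsPMF.pushLaw {q : V → ℝ} (hq : IsPMF q) (c : V → A) : IsPMF (pushLaw c q) :=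
  ⟨fun _ => sum_nonneg fun v _ => hq.1 v,
    by simpa only [mul_one, hq.2] using sum_pushLaw_mul c q fun _ => 1⟩

end PushLaw

section Identification

variable {X Y V M : Type*} [Fintype Y] {W : X → Y → ℝ} {n : ℕ}

theorem sum_Wn_nonneg (hW : IsChannel W) (x : Fin n → X) (D : Finset (Fin n → Y)) :
    0 ≤ ∑ y ∈ D, Wn W n x y :=
  sum_nonneg fun y _ => (hW.Wn n).1 x y

theorem sum_Wn_le_one (hW : IsChannel W) (x : Fin n → X) (D : Finset (Fin n → Y)) :
    ∑ y ∈ D, Wn W n x y ≤ 1 := by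
  rw [← (hW.Wn n).2 x]
  exact sum_le_sum_of_subset_of_nonneg (subset_univ _) fun y _ _ => (hW.Wn n).1 x y

/-- The sets `D m` identify the sets `B m` of codewords up to errors `δ`, when the codeword is
drawn uniformly from `B m`. -/
def Identifies (n : ℕ) (W : X → Y → ℝ) (c : V → Fin n → X) (B : M → Finset V)
    (D : M → Finset (Fin n → Y)) (δ : ℝ) : Prop :=
  (∀ m, ∑ v ∈ B m, ∑ y ∈ (D m)ᶜ, Wn W n (c v) y ≤ δ * #(B m)) ∧
  ∀ m m', m ≠ m' → ∑ v ∈ B m, ∑ y ∈ D m', Wn W n (c v) y ≤ δ * #(B m)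

theorem Identifies.idCodeErr [Fintype X] [Fintype V] [Nonempty V] (hW : IsChannel W)
    {c : V → Fin n → X} {B : M → Finset V} (hne : ∀ m, (B m).Nonempty)
    {D : M → Finset (Fin n → Y)} {δ l : ℝ} (h : Identifies n W c B D δ) {N : Type*} [Fintype N]
    {B' : N → Finset V} {ρ : ℝ} (hB' : IsPairwiseSampler B' ρ)
    (hl : ∀ m, 2 * δ + 4 / (ρ * #(B m)) ≤ l) :
    IDCodeErr n W (fun m x => (Fintype.card N : ℝ)⁻¹ * ∑ i, pushLaw c (unifOn (B m ∩ B' i)) x)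
      D l l := by
  have hρ := hB'.pos
  have hbound : ∀ m (E : Finset (Fin n → Y)),
      ∑ v ∈ B m, ∑ y ∈ E, Wn W n (c v) y ≤ δ * #(B m) →
      ∑ x, ((Fintype.card N : ℝ)⁻¹ * ∑ i, pushLaw c (unifOn (B m ∩ B' i)) x) *
        ∑ y ∈ E, Wn W n x y ≤ l := by
    intro m E hE
    have hcard : (0 : ℝ) < #(B m) := mod_cast (hne m).card_pos
    have hδ : 0 ≤ δ :=
      nonneg_of_mul_nonneg_left ((sum_nonneg fun v _ => sum_Wn_nonneg hW (c v) E).trans hE) hcard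
    calc ∑ x, ((Fintype.card N : ℝ)⁻¹ * ∑ i, pushLaw c (unifOn (B m ∩ B' i)) x) *
          ∑ y ∈ E, Wn W n x y
        = (Fintype.card N : ℝ)⁻¹ * ∑ i, ∑ v, unifOn (B m ∩ B' i) v * ∑ y ∈ E, Wn W n (c v) y := by
          simp only [mul_assoc, ← mul_sum, sum_mul (s := (univ : Finset N))]
          rw [sum_comm]
          simp only [sum_pushLaw_mul]
      _ ≤ (Fintype.card N : ℝ)⁻¹ * (Fintype.card N * (2 * δ + 4 / (ρ * #(B m)))) := by
          gcongr
          exact hB'.sum_unifOn_inter_le (hne m) (fun v => sum_Wn_nonneg hW (c v) E)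
            (fun v => sum_Wn_le_one hW (c v) E) hE
      _ ≤ 2 * δ + 4 / (ρ * #(B m)) := by
          rw [← mul_assoc]
          exact mul_le_of_le_one_left (by positivity) inv_mul_le_one
      _ ≤ l := hl m
  exact ⟨fun m => hbound m _ (h.1 m), fun m m' hm => hbound m _ (h.2 m m' hm)⟩

/-- The encoder sends a uniformly random codeword from `B1 m1 ∩ B2 m2 ∩ B3 m3`. -/
theorem isBC3IDCode_of_identifies {X Y1 Y2 Y3 V : Type*} [Fintype X] [Fintype Y1] [Fintype Y2]
    [Fintype Y3] [Fintype V] [Nonempty V] {W : X → Y1 → Y2 → Y3 → ℝ} (hW : IsBC3 W) {n : ℕ}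
    {c : V → Fin n → X} {k1 k2 k3 : ℕ} {B1 : Fin k1 → Finset V} {B2 : Fin k2 → Finset V}
    {B3 : Fin k3 → Finset V} {ρ1 ρ2 ρ3 : ℝ} (h1 : IsPairwiseDesign B1 ρ1)
    (h2 : IsPairwiseDesign B2 ρ2) (h3 : IsPairwiseDesign B3 ρ3) {D1 : Fin k1 → Finset (Fin n → Y1)}
    {D2 : Fin k2 → Finset (Fin n → Y2)} {D3 : Fin k3 → Finset (Fin n → Y3)} {δ l : ℝ}
    (i1 : Identifies n (marg1 W) c B1 D1 δ) (i2 : Identifies n (marg2 W) c B2 D2 δ)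
    (i3 : Identifies n (marg3 W) c B3 D3 δ)
    (hl : 2 * δ + 4 / (ρ1 * ρ2 * ρ3 * Fintype.card V) ≤ l) :
    IsBC3IDCode n k1 k2 k3 W
      (fun m1 m2 m3 => pushLaw c (unifOn (B1 m1 ∩ B2 m2 ∩ B3 m3))) D1 D2 D3 l l l l l l := by
  have e1 := i1.idCodeErr hW.isChannel_marg1 h1.nonempty
    (h2.toIsPairwiseSampler.inter h3.toIsPairwiseSampler) (l := l)
    fun m => by rw [h1.card_eq]; convert hl using 3; ring
  have e2 := i2.idCodeErr hW.isChannel_marg2 h2.nonempty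
    (h1.toIsPairwiseSampler.inter h3.toIsPairwiseSampler) (l := l)
    fun m => by rw [h2.card_eq]; convert hl using 3; ring
  have e3 := i3.idCodeErr hW.isChannel_marg3 h3.nonempty
    (h1.toIsPairwiseSampler.inter h2.toIsPairwiseSampler) (l := l)
    fun m => by rw [h3.card_eq]; convert hl using 3; ring
  simp only [Fintype.sum_prod_type, Fintype.card_prod, Fintype.card_fin] at e1 e2 e3
  simp only [← inter_assoc] at e1
  simp only [inter_left_comm (B2 _) (B1 _), ← inter_assoc] at e2
  simp only [inter_comm (B3 _) _] at e3
  exact ⟨fun _ _ _ => (isPMF_unifOn _).pushLaw c, e1, e2, e3⟩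

end Identification

section Typicality

variable {X Y : Type*} [Fintype X] {W : X → Y → ℝ} {P : X → ℝ} {n : ℕ}

/-- The joint law of the input and the output of the channel `W` under the input law `P`. -/
def jointLaw (P : X → ℝ) (W : X → Y → ℝ) (a : X × Y) : ℝ :=
  P a.1 * W a.1 a.2

theorem sum_prod_mul_Wn (y : Fin n → Y) :
    ∑ x : Fin n → X, (∏ i, P (x i)) * Wn W n x y = ∏ i, outLaw P W (y i) := by
  simp only [outLaw, prod_univ_sum, Fintype.piFinset_univ, Wn, ← prod_mul_distrib]

variable [Fintype Y]

theorem sum_jointLaw_mul (P : X → ℝ) (W : X → Y → ℝ) (f : X × Y → ℝ) :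
    ∑ a, jointLaw P W a * f a = ∑ x, P x * ∑ y, W x y * f (x, y) := by
  simp only [jointLaw, Fintype.sum_prod_type, mul_sum, mul_assoc]

theorem isPMF_jointLaw (hP : IsPMF P) (hW : IsChannel W) : IsPMF (jointLaw P W) :=
  ⟨fun _ => mul_nonneg (hP.1 _) (hW.1 _ _),
    by simpa only [mul_one, hW.2, hP.2] using sum_jointLaw_mul P W fun _ => 1⟩

theorem sum_prod_mul_sum_Wn_filter (P : X → ℝ) (W : X → Y → ℝ)
    (r : (Fin n → X) → (Fin n → Y) → Prop) :
    ∑ x : Fin n → X, (∏ i, P (x i)) * ∑ y with r x y, Wn W n x y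
      = ∑ c : Fin n → X × Y with r (fun i => (c i).1) fun i => (c i).2,
          ∏ i, jointLaw P W (c i) := by
  rw [sum_filter, ← (Equiv.arrowProdEquivProdArrow (Fin n) (fun _ => X) fun _ => Y).symm.sum_comp,
    Fintype.sum_prod_type]
  simp only [sum_filter, mul_sum, mul_ite, mul_zero, Wn, ← prod_mul_distrib]
  rfl

/-- The outputs whose information density with the input word `x` is at least `n (I(P,W) - ε)`. -/
def typSet (n : ℕ) (W : X → Y → ℝ) (P : X → ℝ) (ε : ℝ) (x : Fin n → X) : Finset (Fin n → Y) :=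
  {y | exp (n * (mutInf P W - ε)) * ∏ i, outLaw P W (y i) ≤ Wn W n x y}

theorem sum_prod_mul_sum_typSet_le (hW : IsChannel W) (ε : ℝ) (x' : Fin n → X) :
    ∑ x : Fin n → X, (∏ i, P (x i)) * ∑ y ∈ typSet n W P ε x', Wn W n x y
      ≤ exp (-(n * (mutInf P W - ε))) := by
  simp only [mul_sum]
  rw [sum_comm]
  simp only [sum_prod_mul_Wn]
  rw [exp_neg, ← one_div, le_div_iff₀' (exp_pos _), mul_sum]
  exact (sum_le_sum fun y hy => (mem_filter.1 hy).2).trans (sum_Wn_le_one hW x' _)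

theorem le_abs_sum_infDensity_sub (hP : IsPMF P) (hW : IsChannel W) {ε : ℝ} {c : Fin n → X × Y}
    (hc : ∏ i, jointLaw P W (c i) ≠ 0)
    (hlt : Wn W n (fun i => (c i).1) (fun i => (c i).2)
      < exp (n * (mutInf P W - ε)) * ∏ i, outLaw P W (c i).2) :
    n * ε ≤ |∑ i, infDensity P W (c i).1 (c i).2 - n * mutInf P W| := by
  have hne : ∀ i, P (c i).1 * W (c i).1 (c i).2 ≠ 0 := fun i =>
    prod_ne_zero_iff.1 hc i (mem_univ i)
  rw [← exp_sum_infDensity_mul_prod_outLaw hP.1 hW.1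
    (fun i => (hP.1 _).lt_of_ne' (left_ne_zero_of_mul (hne i)))
    (fun i => (hW.1 _ _).lt_of_ne' (right_ne_zero_of_mul (hne i)))] at hlt
  have hsum := exp_lt_exp.1 (lt_of_mul_lt_mul_right hlt
    (prod_nonneg fun i _ => (hP.outLaw hW).1 _))
  rw [abs_sub_comm]
  exact le_abs.2 (Or.inl (by linarith))

theorem sum_prod_mul_sum_compl_typSet_le (hW : IsChannel W) (hP : IsPMF P) (hn : 0 < n) {ε : ℝ}
    (hε : 0 < ε) :
    ∑ x : Fin n → X, (∏ i, P (x i)) * ∑ y ∈ (typSet n W P ε x)ᶜ, Wn W n x y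
      ≤ 8 * (Fintype.card X * Fintype.card Y) / (n * ε ^ 2) := by
  have hjoint := isPMF_jointLaw hP hW
  have hmean : ∑ _i : Fin n, ∑ a, jointLaw P W a * infDensity P W a.1 a.2 = n * mutInf P W := by
    rw [sum_const, card_univ, Fintype.card_fin, nsmul_eq_mul, mutInf_eq_sum_infDensity,
      sum_jointLaw_mul P W fun a => infDensity P W a.1 a.2]
  have hsecond : ∑ a, jointLaw P W a * infDensity P W a.1 a.2 ^ 2
      ≤ 8 * (Fintype.card X * Fintype.card Y) :=
    (sum_jointLaw_mul P W fun a => infDensity P W a.1 a.2 ^ 2).trans_le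
      (sum_mul_infDensity_sq_le hP hW)
  simp only [typSet, compl_filter, not_le]
  rw [sum_prod_mul_sum_Wn_filter P W fun x y =>
    Wn W n x y < exp (n * (mutInf P W - ε)) * ∏ i, outLaw P W (y i), ← sum_filter_ne_zero]
  calc _ ≤ ∑ c : Fin n → X × Y with n * ε ≤ |∑ i, infDensity P W (c i).1 (c i).2
          - ∑ _i : Fin n, ∑ a, jointLaw P W a * infDensity P W a.1 a.2|,
          ∏ i, jointLaw P W (c i) := by
        refine sum_le_sum_of_subset_of_nonneg (fun c hc => ?_) fun c _ _ =>
          prod_nonneg fun i _ => hjoint.1 _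
        rw [mem_filter, mem_filter_univ] at hc
        rw [mem_filter_univ, hmean]
        exact le_abs_sum_infDensity_sub hP hW hc.2 hc.1
    _ ≤ (∑ _i : Fin n, ∑ a, jointLaw P W a * infDensity P W a.1 a.2 ^ 2) / (n * ε) ^ 2 :=
        sum_pi_prod_filter_le_abs_le (fun _ => hjoint) (fun _ a => infDensity P W a.1 a.2)
          (by positivity)
    _ ≤ n * (8 * (Fintype.card X * Fintype.card Y)) / (n * ε) ^ 2 := by
        rw [sum_const, card_univ, Fintype.card_fin, nsmul_eq_mul]
        gcongr
    _ = 8 * (Fintype.card X * Fintype.card Y) / (n * ε ^ 2) := by field_simp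

/-- The input words that are missed by their typical set with probability less than `δ`. -/
def goodWords (n : ℕ) (W : X → Y → ℝ) (P : X → ℝ) (ε δ : ℝ) : Finset (Fin n → X) :=
  {x | ∑ y ∈ (typSet n W P ε x)ᶜ, Wn W n x y < δ}

theorem sum_compl_goodWords_le (hW : IsChannel W) (hP : IsPMF P) (hn : 0 < n) {ε δ : ℝ}
    (hε : 0 < ε) (hδ : 0 < δ) :
    ∑ x ∈ (goodWords n W P ε δ)ᶜ, ∏ i, P (x i)
      ≤ 8 * (Fintype.card X * Fintype.card Y) / (n * ε ^ 2) / δ := by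
  rw [le_div_iff₀' hδ]
  simp only [goodWords, compl_filter, not_lt]
  exact (mul_sum_filter_le_sum_mul (IsPMF.pi fun _ => hP).1 (fun x => sum_Wn_nonneg hW x _) δ).trans
    (sum_prod_mul_sum_compl_typSet_le hW hP hn hε)

end Typicality

section ExponentialMoments

variable {V A : Type*} [Fintype V] [DecidableEq V] [Fintype A] {q : A → ℝ}

/-- Swapping the coordinates outside `T` of two tuples is an involution that preserves their joint
law. -/
theorem sum_pi_prod_mul_sum_piecewise (hq : IsPMF q) (T : Finset V) (F : (V → A) → ℝ) :
    ∑ c : V → A, (∏ v, q (c v)) * ∑ c' : V → A, (∏ v, q (c' v)) * F (T.piecewise c' c)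
      = ∑ c : V → A, (∏ v, q (c v)) * F c := by
  have hswap : Function.Involutive fun d : (V → A) × (V → A) =>
      (T.piecewise d.1 d.2, T.piecewise d.2 d.1) := fun d => by
    simp only [piecewise_idem_left, piecewise_idem_right, piecewise_same]
  have hlaw : ∀ c c' : V → A, (∏ v, q (T.piecewise c' c v)) * ∏ v, q (T.piecewise c c' v)
      = (∏ v, q (c v)) * ∏ v, q (c' v) := by
    intro c c'
    simp only [← prod_mul_distrib]
    refine prod_congr rfl fun v _ => ?_
    by_cases hv : v ∈ T <;> simp [hv, mul_comm]
  calc ∑ c : V → A, (∏ v, q (c v)) * ∑ c' : V → A, (∏ v, q (c' v)) * F (T.piecewise c' c)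
      = ∑ d : (V → A) × (V → A), (∏ v, q (d.1 v)) * (∏ v, q (d.2 v)) * F d.1 := by
        simp only [mul_sum]
        rw [sum_comm, ← Fintype.sum_prod_type']
        refine Fintype.sum_bijective _ hswap.bijective _ _ fun d => ?_
        rw [hlaw, ← mul_assoc]
    _ = ∑ c : V → A, (∏ v, q (c v)) * F c := by
        simp only [Fintype.sum_prod_type, mul_right_comm _ (∏ _, q _), ← mul_sum,
          (IsPMF.pi fun _ : V => hq).2, mul_one]

theorem IsPMF.sum_mul_exp_le (hq : IsPMF q) {f : A → ℝ} (h0 : ∀ a, 0 ≤ f a) (h1 : ∀ a, f a ≤ 1)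
    {σ : ℝ} (hσ : ∑ a, q a * f a ≤ σ) : ∑ a, q a * exp (f a) ≤ exp (2 * σ) := by
  have hexp : ∀ a, exp (f a) ≤ 1 + 2 * f a := fun a => by
    have habs := abs_exp_sub_one_le (x := f a) (by rw [abs_of_nonneg (h0 a)]; exact h1 a)
    rw [abs_of_nonneg (h0 a)] at habs
    linarith [le_abs_self (exp (f a) - 1)]
  calc ∑ a, q a * exp (f a) ≤ ∑ a, q a * (1 + 2 * f a) :=
        sum_le_sum fun a _ => mul_le_mul_of_nonneg_left (hexp a) (hq.1 a)
    _ = 1 + 2 * ∑ a, q a * f a := by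
        simp only [mul_add, mul_one, sum_add_distrib, hq.2, mul_left_comm _ (2 : ℝ), ← mul_sum]
    _ ≤ 2 * σ + 1 := by linarith
    _ ≤ exp (2 * σ) := add_one_le_exp _

/-- The summand may depend on the points outside `T`. -/
theorem sum_pi_prod_mul_exp_sum_le (hq : IsPMF q) {T : Finset V} {g : (V → A) → A → ℝ}
    (hg : ∀ c c', g (T.piecewise c' c) = g c) (h0 : ∀ c a, 0 ≤ g c a) (h1 : ∀ c a, g c a ≤ 1)
    {σ : ℝ} (hσ : ∀ c, ∑ a, q a * g c a ≤ σ) :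
    ∑ c : V → A, (∏ v, q (c v)) * exp (∑ v ∈ T, g c (c v)) ≤ exp (2 * (#T * σ)) := by
  have hinner : ∀ c, ∑ c' : V → A, (∏ v, q (c' v)) * exp (∑ v ∈ T, g c (c' v))
      = (∑ a, q a * exp (g c a)) ^ #T := by
    intro c
    have hpoint : ∀ v, ∑ a, q a * (if v ∈ T then exp (g c a) else 1)
        = if v ∈ T then ∑ a, q a * exp (g c a) else 1 := fun _ => by
      split_ifs <;> simp only [mul_one, hq.2]
    have h := sum_pi_prod_mul_prod (fun _ => q) fun v a => if v ∈ T then exp (g c a) else 1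
    simpa only [hpoint, prod_ite_mem, univ_inter, ← exp_sum, prod_const] using h
  rw [← sum_pi_prod_mul_sum_piecewise hq T]
  have hpw : ∀ c c' : V → A, ∑ v ∈ T, g (T.piecewise c' c) (T.piecewise c' c v)
      = ∑ v ∈ T, g c (c' v) := fun c c' => by
    rw [hg]
    exact sum_congr rfl fun v hv => by rw [piecewise_eq_of_mem _ _ _ hv]
  simp only [hpw, hinner]
  have hpi := IsPMF.pi fun _ : V => hq
  calc ∑ c : V → A, (∏ v, q (c v)) * (∑ a, q a * exp (g c a)) ^ #T
      ≤ ∑ c : V → A, (∏ v, q (c v)) * exp (2 * σ) ^ #T := by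
        refine sum_le_sum fun c _ => mul_le_mul_of_nonneg_left (pow_le_pow_left₀ ?_
          (hq.sum_mul_exp_le (h0 c) (h1 c) (hσ c)) _) (hpi.1 c)
        exact sum_nonneg fun a _ => mul_nonneg (hq.1 a) (exp_nonneg _)
    _ = exp (2 * (#T * σ)) := by
        rw [← sum_mul, hpi.2, one_mul, ← exp_nat_mul]
        ring_nf

end ExponentialMoments

section Decoder

variable {V A C : Type*} {K : A → C → ℝ} {E : A → Finset C}

/-- The outputs that lie in the decoding set `E (c v)` of some codeword `c v` with `v ∈ S`. -/
def unionDecoder (E : A → Finset C) (c : V → A) (S : Finset V) : Finset C :=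
  S.biUnion fun v => E (c v)

theorem subset_unionDecoder (E : A → Finset C) (c : V → A) {S : Finset V} {v : V} (hv : v ∈ S) :
    E (c v) ⊆ unionDecoder E c S :=
  subset_biUnion_of_mem (fun v => E (c v)) hv

theorem sum_unionDecoder_le (hK : ∀ a y, 0 ≤ K a y) (c : V → A) (S : Finset V) (a : A) :
    ∑ y ∈ unionDecoder E c S, K a y ≤ ∑ v ∈ S, ∑ y ∈ E (c v), K a y := by
  induction S using Finset.induction_on with
  | empty => simp only [unionDecoder, biUnion_empty, sum_empty, le_refl]
  | insert v S hv ih =>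
    rw [sum_insert hv, unionDecoder, biUnion_insert]
    have hinter := sum_union_inter (s₁ := E (c v)) (s₂ := unionDecoder E c S) (f := K a)
    have : 0 ≤ ∑ y ∈ E (c v) ∩ unionDecoder E c S, K a y := sum_nonneg fun y _ => hK a y
    rw [unionDecoder] at *
    linarith

theorem sum_mul_sum_unionDecoder_le [Fintype A] {q : A → ℝ} (hq : ∀ a, 0 ≤ q a)
    (hK : ∀ a y, 0 ≤ K a y) {τ : ℝ} (hτ : ∀ a', ∑ a, q a * ∑ y ∈ E a', K a y ≤ τ) (c : V → A)
    (S : Finset V) : ∑ a, q a * ∑ y ∈ unionDecoder E c S, K a y ≤ #S * τ :=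
  calc ∑ a, q a * ∑ y ∈ unionDecoder E c S, K a y
      ≤ ∑ a, q a * ∑ v ∈ S, ∑ y ∈ E (c v), K a y :=
        sum_le_sum fun a _ => mul_le_mul_of_nonneg_left (sum_unionDecoder_le hK c S a) (hq a)
    _ = ∑ v ∈ S, ∑ a, q a * ∑ y ∈ E (c v), K a y := by
        simp only [mul_sum (s := S)]
        exact sum_comm
    _ ≤ #S * τ := by
        rw [← nsmul_eq_mul]
        exact sum_le_card_nsmul _ _ _ fun v _ => hτ (c v)

theorem sum_pi_prod_mul_exp_sum_unionDecoder_le [Fintype V] [Fintype A] {q : A → ℝ}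
    (hq : IsPMF q) (hK : ∀ a y, 0 ≤ K a y) (hK1 : ∀ a D, ∑ y ∈ D, K a y ≤ 1) {τ : ℝ}
    (hτ : ∀ a', ∑ a, q a * ∑ y ∈ E a', K a y ≤ τ) {T S : Finset V} (hTS : Disjoint T S) :
    ∑ c : V → A, (∏ v, q (c v)) * exp (∑ v ∈ T, ∑ y ∈ unionDecoder E c S, K (c v) y)
      ≤ exp (2 * (#T * (#S * τ))) := by
  refine sum_pi_prod_mul_exp_sum_le hq (g := fun c a => ∑ y ∈ unionDecoder E c S, K a y)
    (fun c c' => ?_) (fun c a => sum_nonneg fun y _ => hK a y) (fun c a => hK1 a _)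
    fun c => sum_mul_sum_unionDecoder_le hq.1 hK hτ c S
  have hdec : unionDecoder E (T.piecewise c' c) S = unionDecoder E c S :=
    biUnion_congr rfl fun v hv => by
      rw [piecewise_eq_of_notMem _ _ _ (disjoint_right.1 hTS hv)]
  rw [hdec]

variable {M : Type*} [Fintype M] {B : M → Finset V}

/-- If the score of the codewords `c` is less than `1`, then for all `m ≠ m'` a codeword drawn from
`B m \ B m'` lands in the union decoder of `B m'` with total weight less than `δ * b`. -/
def falseIdScore (K : A → C → ℝ) (E : A → Finset C) (δ b : ℝ) (B : M → Finset V) (c : V → A) : ℝ :=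
  ∑ m ∈ (univ : Finset M).offDiag,
    exp (∑ v ∈ B m.1 \ B m.2, ∑ y ∈ unionDecoder E c (B m.2), K (c v) y - δ * b)

theorem falseIdScore_nonneg (K : A → C → ℝ) (E : A → Finset C) (δ b : ℝ) (B : M → Finset V)
    (c : V → A) : 0 ≤ falseIdScore K E δ b B c :=
  sum_nonneg fun _ _ => exp_nonneg _

theorem sum_sdiff_le_of_falseIdScore_lt_one {δ b : ℝ} {c : V → A}
    (hs : falseIdScore K E δ b B c < 1) {m m' : M} (hm : m ≠ m') :
    ∑ v ∈ B m \ B m', ∑ y ∈ unionDecoder E c (B m'), K (c v) y ≤ δ * b := by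
  have hle := single_le_sum (f := fun m : M × M =>
    exp (∑ v ∈ B m.1 \ B m.2, ∑ y ∈ unionDecoder E c (B m.2), K (c v) y - δ * b))
    (fun _ _ => exp_nonneg _) (mem_offDiag (x := (m, m')) |>.2 ⟨mem_univ m, mem_univ m', hm⟩)
  linarith [exp_lt_one_iff.1 (hle.trans_lt hs)]

theorem sum_pi_prod_mul_falseIdScore_le [Fintype V] [Fintype A] {q : A → ℝ} (hq : IsPMF q)
    (hK : ∀ a y, 0 ≤ K a y) (hK1 : ∀ a D, ∑ y ∈ D, K a y ≤ 1) {τ : ℝ} (hτ0 : 0 ≤ τ)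
    (hτ : ∀ a', ∑ a, q a * ∑ y ∈ E a', K a y ≤ τ) {b : ℝ} (hB : ∀ m, #(B m) = b) (δ : ℝ) :
    ∑ c : V → A, (∏ v, q (c v)) * falseIdScore K E δ b B c
      ≤ Fintype.card M ^ 2 * exp (2 * b ^ 2 * τ - δ * b) := by
  have hpair : ∀ m : M × M, ∑ c : V → A, (∏ v, q (c v)) *
      exp (∑ v ∈ B m.1 \ B m.2, ∑ y ∈ unionDecoder E c (B m.2), K (c v) y - δ * b)
      ≤ exp (2 * b ^ 2 * τ - δ * b) := by
    intro m
    simp only [sub_eq_add_neg, exp_add, ← mul_assoc, ← sum_mul]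
    refine mul_le_mul_of_nonneg_right ((sum_pi_prod_mul_exp_sum_unionDecoder_le hq hK hK1 hτ
      sdiff_disjoint).trans (exp_le_exp.2 ?_)) (exp_nonneg _)
    have hcard : (#(B m.1 \ B m.2) : ℝ) ≤ b := by
      rw [← hB m.1]
      exact mod_cast card_le_card sdiff_subset
    have : 0 ≤ b := (Nat.cast_nonneg _).trans hcard
    rw [hB, mul_assoc, sq, mul_assoc b]
    gcongr
  simp only [falseIdScore, mul_sum (s := (univ : Finset M).offDiag)]
  rw [sum_comm]
  calc _ ≤ #(univ : Finset M).offDiag • exp (2 * b ^ 2 * τ - δ * b) :=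
        sum_le_card_nsmul _ _ _ fun m _ => hpair m
    _ ≤ Fintype.card M ^ 2 * exp (2 * b ^ 2 * τ - δ * b) := by
        rw [nsmul_eq_mul, offDiag_card, ← sq, card_univ]
        gcongr
        exact mod_cast Nat.sub_le _ _

theorem identifies_unionDecoder {X Y : Type*} [Fintype Y] {W : X → Y → ℝ} (hW : IsChannel W)
    {n : ℕ} {E : (Fin n → X) → Finset (Fin n → Y)} {δ b : ℝ} (hδ : 0 ≤ δ) (hB : ∀ m, #(B m) = b)
    (hinter : ∀ m m', m ≠ m' → #(B m ∩ B m') ≤ δ * b) {c : V → Fin n → X}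
    (hmiss : ∀ v, ∑ y ∈ (E (c v))ᶜ, Wn W n (c v) y ≤ δ)
    (hs : falseIdScore (Wn W n) E δ b B c < 1) :
    Identifies n W c B (fun m => unionDecoder E c (B m)) (2 * δ) := by
  constructor
  · intro m
    calc ∑ v ∈ B m, ∑ y ∈ (unionDecoder E c (B m))ᶜ, Wn W n (c v) y
        ≤ ∑ v ∈ B m, ∑ y ∈ (E (c v))ᶜ, Wn W n (c v) y :=
          sum_le_sum fun v hv => sum_le_sum_of_subset_of_nonneg
            (compl_subset_compl.2 (subset_unionDecoder E c hv))
            fun y _ _ => (hW.Wn n).1 _ _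
      _ ≤ #(B m) * δ := by
          rw [← nsmul_eq_mul]
          exact sum_le_card_nsmul _ _ _ fun v _ => hmiss v
      _ ≤ 2 * δ * #(B m) := by linarith [mul_nonneg (Nat.cast_nonneg (α := ℝ) #(B m)) hδ]
  · intro m m' hm
    have hcommon : ∑ v ∈ B m ∩ B m', ∑ y ∈ unionDecoder E c (B m'), Wn W n (c v) y ≤ δ * b := by
      refine (sum_le_card_nsmul _ _ 1 fun v _ => sum_Wn_le_one hW _ _).trans ?_
      rw [nsmul_one]
      exact hinter m m' hm
    rw [← sum_inter_add_sum_sdiff (B m) (B m'), hB m]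
    linarith [sum_sdiff_le_of_falseIdScore_lt_one hs hm]

end Decoder

section Pools

/-- Random codewords indexed by the pool `V` serve the receiver `W` with rate `R` and error `δ`,
unless a bad event of small probability occurs; the message sets have relative size `ρ`. The bad
event is that a codeword lies outside `G` or that the score `Φ` is at least `1`; the factor `2`
leaves room for drawing the codewords conditionally on the sets `G` of all three receivers. -/
def PoolServes {X Y : Type*} [Fintype X] [Fintype Y] (n : ℕ) (W : X → Y → ℝ) (P : X → ℝ)
    (V : Type*) [Fintype V] (δ R ρ : ℝ) : Prop :=
  ∃ (k : ℕ) (B : Fin k → Finset V) (G : Finset (Fin n → X)) (Φ : (V → Fin n → X) → ℝ),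
    IsPairwiseDesign B ρ ∧ AttainsIDRate n k R ∧
    (∑ x ∈ Gᶜ, ∏ i, P (x i) ≤ 1 / 6) ∧ (∀ c, 0 ≤ Φ c) ∧
    (∀ q : (Fin n → X) → ℝ, IsPMF q → (∀ x, q x ≤ 2 * ∏ i, P (x i)) →
      ∑ c : V → Fin n → X, (∏ v, q (c v)) * Φ c ≤ 1 / 4) ∧
    ∀ c, Φ c < 1 → (∀ v, c v ∈ G) → ∃ D, Identifies n W c B D δ

theorem exists_bc3Code_of_poolServes {X Y1 Y2 Y3 V : Type*} [Fintype X] [Fintype Y1] [Fintype Y2]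
    [Fintype Y3] [Fintype V] [Nonempty V] {W : X → Y1 → Y2 → Y3 → ℝ} (hW : IsBC3 W) {P : X → ℝ}
    (hP : IsPMF P) {n : ℕ} {δ R1 R2 R3 ρ1 ρ2 ρ3 l : ℝ} (s1 : PoolServes n (marg1 W) P V δ R1 ρ1)
    (s2 : PoolServes n (marg2 W) P V δ R2 ρ2) (s3 : PoolServes n (marg3 W) P V δ R3 ρ3)
    (hδ : 2 * δ + 4 / (ρ1 * ρ2 * ρ3 * Fintype.card V) ≤ l) :
    ∃ (k1 k2 k3 : ℕ) (Q : Fin k1 → Fin k2 → Fin k3 → (Fin n → X) → ℝ)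
      (D1 : Fin k1 → Finset (Fin n → Y1)) (D2 : Fin k2 → Finset (Fin n → Y2))
      (D3 : Fin k3 → Finset (Fin n → Y3)),
      IsBC3IDCode n k1 k2 k3 W Q D1 D2 D3 l l l l l l ∧
      AttainsIDRate n k1 R1 ∧ AttainsIDRate n k2 R2 ∧ AttainsIDRate n k3 R3 := by
  obtain ⟨k1, B1, G1, Φ1, hB1, hR1, hG1, hΦ1, hE1, hD1⟩ := s1
  obtain ⟨k2, B2, G2, Φ2, hB2, hR2, hG2, hΦ2, hE2, hD2⟩ := s2
  obtain ⟨k3, B3, G3, Φ3, hB3, hR3, hG3, hΦ3, hE3, hD3⟩ := s3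
  set p : (Fin n → X) → ℝ := fun x => ∏ i, P (x i)
  have hp : IsPMF p := IsPMF.pi fun _ => hP
  have hG : 1 / 2 ≤ ∑ x ∈ G1 ∩ G2 ∩ G3, p x := by
    have h12 := sum_union_le_add hp.1 G1ᶜ G2ᶜ
    have h123 := sum_union_le_add hp.1 (G1ᶜ ∪ G2ᶜ) G3ᶜ
    rw [← compl_inter] at h12
    rw [← compl_inter, ← compl_inter] at h123
    have htotal := sum_add_sum_compl (G1 ∩ G2 ∩ G3) p
    rw [hp.2] at htotal
    linarith
  have hq : IsPMF (condOn p (G1 ∩ G2 ∩ G3)) := isPMF_condOn hp.1 (one_half_pos.trans_le hG)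
  have hq_le : ∀ x, condOn p (G1 ∩ G2 ∩ G3) x ≤ 2 * p x := fun x => by
    simpa only [div_div_eq_mul_div, div_one, mul_comm] using condOn_le_div hp.1 one_half_pos hG x
  have hscore : ∑ c : V → Fin n → X,
      (∏ v, condOn p (G1 ∩ G2 ∩ G3) (c v)) * (Φ1 c + Φ2 c + Φ3 c) < 1 := by
    simp_rw [mul_add, sum_add_distrib]
    linarith [hE1 _ hq hq_le, hE2 _ hq hq_le, hE3 _ hq hq_le]
  obtain ⟨c, hc, hlt⟩ := (IsPMF.pi (ι := V) fun _ => hq).exists_pos_and_lt_of_sum_lt hscore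
  have hcG : ∀ v, c v ∈ G1 ∩ G2 ∩ G3 := fun v =>
    mem_of_condOn_ne_zero (prod_ne_zero_iff.1 hc.ne' v (mem_univ v))
  simp only [mem_inter] at hcG
  obtain ⟨D1, i1⟩ := hD1 c (by linarith [hΦ2 c, hΦ3 c]) fun v => (hcG v).1.1
  obtain ⟨D2, i2⟩ := hD2 c (by linarith [hΦ1 c, hΦ3 c]) fun v => (hcG v).1.2
  obtain ⟨D3, i3⟩ := hD3 c (by linarith [hΦ1 c, hΦ2 c]) fun v => (hcG v).2
  exact ⟨k1, k2, k3, _, D1, D2, D3, isBC3IDCode_of_identifies hW hB1 hB2 hB3 i1 i2 i3 hδ,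
    hR1, hR2, hR3⟩

variable {X Y V : Type*} [Fintype X] [Fintype Y] [Fintype V] {W : X → Y → ℝ} {P : X → ℝ}
  {n : ℕ} {δ : ℝ}

theorem poolServes_zero (n : ℕ) (V : Type*) [Fintype V] (hδ : 0 ≤ δ) :
    PoolServes n W P V δ 0 1 := by
  refine ⟨1, fun _ => univ, univ, fun _ => 0, ⟨⟨one_pos, by simp, by simp⟩, by simp⟩,
    ⟨by simp, by simp⟩, by simp, by simp, by simp, fun c _ _ => ⟨fun _ => univ, fun m => ?_,
      fun m m' h => absurd (Subsingleton.elim m m') h⟩⟩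
  simp only [compl_univ, sum_empty, sum_const_zero]
  positivity

theorem poolServes_of_design (hW : IsChannel W) (hP : IsPMF P) (hn : 0 < n) {ε R ρ b : ℝ} {k : ℕ}
    (hε : 0 < ε) (hδ : 0 < δ) (hR : AttainsIDRate n k R) {B : Fin k → Finset V}
    (hB : IsPairwiseDesign B ρ) (hb : ∀ m, #(B m) = b)
    (hinter : ∀ m m', m ≠ m' → #(B m ∩ B m') ≤ δ * b)
    (hmiss : 8 * (Fintype.card X * Fintype.card Y) / (n * ε ^ 2) / δ ≤ 1 / 6)
    (hfalse : k ^ 2 * exp (2 * b ^ 2 * (2 * exp (-(n * (mutInf P W - ε)))) - δ * b) ≤ 1 / 4) :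
    PoolServes n W P V (2 * δ) R ρ := by
  have hK : ∀ x y, 0 ≤ Wn W n x y := (hW.Wn n).1
  refine ⟨k, B, goodWords n W P ε δ, falseIdScore (Wn W n) (typSet n W P ε) δ b B, hB, hR,
    (sum_compl_goodWords_le hW hP hn hε hδ).trans hmiss, falseIdScore_nonneg _ _ δ b B,
    fun q hq hq_le => ?_, fun c hc hG => ⟨_, identifies_unionDecoder hW hδ.le hb hinter
      (fun v => (mem_filter_univ _).1 (hG v) |>.le) hc⟩⟩
  have hτ : ∀ x', ∑ x, q x * ∑ y ∈ typSet n W P ε x', Wn W n x y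
      ≤ 2 * exp (-(n * (mutInf P W - ε))) := fun x' =>
    calc ∑ x, q x * ∑ y ∈ typSet n W P ε x', Wn W n x y
        ≤ ∑ x : Fin n → X, (2 * ∏ i, P (x i)) * ∑ y ∈ typSet n W P ε x', Wn W n x y :=
          sum_le_sum fun x _ => mul_le_mul_of_nonneg_right (hq_le x) (sum_Wn_nonneg hW x _)
      _ ≤ 2 * exp (-(n * (mutInf P W - ε))) := by
          simp_rw [mul_assoc, ← mul_sum]
          gcongr
          exact sum_prod_mul_sum_typSet_le hW ε x'
  refine (sum_pi_prod_mul_falseIdScore_le hq hK (sum_Wn_le_one hW) (by positivity) hτ hb δ).trans ?_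
  rwa [Fintype.card_fin]

end Pools

section GraphDesign

variable {V U T M : Type*}

theorem card_fiber_mul_card {G H : Type*} [AddCommGroup G] [AddCommGroup H] [Fintype G] [Fintype H]
    (f : G →+ H) (hf : Function.Surjective f) (t : H) :
    #{m | f m = t} * Fintype.card H = Fintype.card G := by
  have hcard : #(univ : Finset G) = ∑ b : H, #{m | f m = b} :=
    card_eq_sum_card_fiberwise fun _ _ => mem_coe.2 (mem_univ _)
  rw [← card_univ (α := G), hcard,
    sum_congr rfl fun b _ => AddMonoidHom.card_fiber_eq_of_mem_range f (hf b) (hf t), sum_const,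
    card_univ, smul_eq_mul, mul_comm]

/-- The graphs of a family of maps `U → T`, as subsets of `V ≃ U × T`. -/
def graphFamily [Fintype V] (φ : V ≃ U × T) (f : U → M → T) (m : M) : Finset V :=
  {v | f (φ v).1 m = (φ v).2}

theorem card_graphFamily [Fintype V] [Fintype U] (φ : V ≃ U × T) (f : U → M → T) (m : M) :
    #(graphFamily φ f m) = Fintype.card U := by
  rw [← card_univ]
  refine card_bij' (fun v _ => (φ v).1) (fun u _ => φ.symm (u, f u m)) (by simp)
    (fun u _ => by simp [graphFamily]) (fun v hv => ?_) (fun u _ => by simp)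
  rw [(mem_filter_univ v).1 hv, Prod.mk.eta, Equiv.symm_apply_apply]

theorem card_graphFamily_inter_le [Fintype V] [Fintype U] (φ : V ≃ U × T) (f : U → M → T)
    (m m' : M) [DecidablePred fun u => f u m = f u m'] :
    #(graphFamily φ f m ∩ graphFamily φ f m') ≤ #{u | f u m = f u m'} := by
  refine card_le_card_of_injOn (fun v => (φ v).1) (fun v hv => ?_) fun v hv w hw hvw => ?_
  · simp only [graphFamily, coe_inter, coe_filter_univ, Set.mem_inter_iff,
      Set.mem_ofPred_eq] at hv ⊢
    rw [hv.1, hv.2]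
  · simp only [graphFamily, coe_inter, coe_filter_univ, Set.mem_inter_iff,
      Set.mem_ofPred_eq] at hv hw hvw
    refine φ.injective (Prod.ext hvw ?_)
    rw [← hv.1, ← hw.1, hvw]

theorem isPairwiseDesign_graphFamily [Fintype V] [Fintype T] [Fintype M]
    [AddCommGroup T] [AddCommGroup M] (φ : V ≃ U × T) (f : U → M →+ T)
    (hf : ∀ u, Function.Surjective (f u))
    (hprod : ∀ u u', u ≠ u' → Function.Surjective ((f u).prod (f u'))) :
    IsPairwiseDesign (graphFamily φ fun u m => f u m) (Fintype.card T : ℝ)⁻¹ := by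
  have := Fintype.ofSurjective (fun v => (φ v).1) (Prod.fst_surjective.comp φ.surjective)
  have hT : (0 : ℝ) < Fintype.card T := mod_cast Fintype.card_pos
  refine ⟨⟨inv_pos.2 hT, fun v => ?_, fun v v' hne => ?_⟩, fun m => ?_⟩
  · simp only [graphFamily, mem_filter_univ]
    rw [← card_fiber_mul_card (f (φ v).1) (hf _) (φ v).2, Nat.cast_mul, mul_comm,
      mul_inv_cancel_right₀ hT.ne']
  · simp only [graphFamily, mem_filter_univ]
    by_cases hu : (φ v).1 = (φ v').1
    · rw [filter_false_of_mem, card_empty, Nat.cast_zero]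
      · positivity
      · rintro m - ⟨hv, hv'⟩
        exact hne (φ.injective (Prod.ext hu (by rw [← hv, ← hv', hu])))
    · have hcard := card_fiber_mul_card _ (hprod _ _ hu) ((φ v).2, (φ v').2)
      simp only [AddMonoidHom.prod_apply, Prod.mk.injEq, Fintype.card_prod] at hcard
      rw [← hcard]
      push_cast
      apply le_of_eq
      field_simp
  · rw [card_graphFamily, Fintype.card_congr φ, Fintype.card_prod, Nat.cast_mul, mul_comm,
      mul_inv_cancel_right₀ hT.ne']

theorem IsPairwiseDesign.comp_equiv {M' : Type*} [Fintype V] [Fintype M] [Fintype M']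
    {B : M → Finset V} {ρ : ℝ} (h : IsPairwiseDesign B ρ) (e : M' ≃ M) :
    IsPairwiseDesign (fun m => B (e m)) ρ := by
  have hcard : ∀ (p : M → Prop) [DecidablePred p], #{m' | p (e m')} = #{m | p m} := fun p _ =>
    card_bij' (fun m' _ => e m') (fun m _ => e.symm m) (by simp) (by simp) (by simp) (by simp)
  refine ⟨⟨h.pos, fun v => ?_, fun v v' hne => ?_⟩, fun m => h.card_eq _⟩
  · rw [hcard (fun m => v ∈ B m), h.card_mem, Fintype.card_congr e]
  · rw [hcard (fun m => v ∈ B m ∧ v' ∈ B m), Fintype.card_congr e]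
    exact h.card_mem_mem v v' hne

end GraphDesign

section PolynomialDesign

variable {K : Type*} [Field K] {d e D : ℕ}

/-- Evaluation at `u` of an `e`-tuple of polynomials in `d` variables with individual degrees less
than `D`, as an additive map on the coefficients. -/
def polyEval (u : Fin d → K) : (Fin e → (Fin d → Fin D) → K) →+ (Fin e → K) where
  toFun m j := ∑ s, m j s * ∏ i, u i ^ (s i : ℕ)
  map_zero' := by ext j; simp
  map_add' m m' := by ext j; simp [add_mul, sum_add_distrib]

theorem polyEval_apply (u : Fin d → K) (m : Fin e → (Fin d → Fin D) → K) (j : Fin e) :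
    polyEval u m j = ∑ s, m j s * ∏ i, u i ^ (s i : ℕ) :=
  rfl

theorem polyEval_surjective (hD : 0 < D) (u : Fin d → K) :
    Function.Surjective (polyEval (e := e) (D := D) u) := fun t =>
  ⟨fun j s => if s = (fun _ => ⟨0, hD⟩) then t j else 0, by ext j; simp [polyEval_apply]⟩

theorem exists_polyEval_eq_affine (hD : 1 < D) (i : Fin d) (a b : Fin e → K) :
    ∃ m, ∀ u : Fin d → K, polyEval (D := D) u m = fun j => a j + b j * u i := by
  set s0 : Fin d → Fin D := fun _ => ⟨0, by omega⟩ with hs0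
  set s1 : Fin d → Fin D := Function.update s0 i ⟨1, hD⟩ with hs1
  have hmonomial0 : ∀ u : Fin d → K, ∏ l, u l ^ (s0 l : ℕ) = 1 := fun u => by simp [hs0]
  have hmonomial1 : ∀ u : Fin d → K, ∏ l, u l ^ (s1 l : ℕ) = u i := fun u => by
    rw [prod_eq_single i (fun l _ hl => by simp [hs1, hs0, hl]) (by simp)]
    simp [hs1]
  refine ⟨fun j s => (if s = s0 then a j else 0) + (if s = s1 then b j else 0), fun u => ?_⟩
  ext j
  simp only [polyEval_apply, add_mul, sum_add_distrib, ite_mul, zero_mul, sum_ite_eq', mem_univ,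
    if_true, hmonomial0, hmonomial1, mul_one]

theorem polyEval_prod_surjective (hD : 1 < D) {u u' : Fin d → K} (h : u ≠ u') :
    Function.Surjective ((polyEval (e := e) (D := D) u).prod (polyEval u')) := by
  obtain ⟨i, hi⟩ := Function.ne_iff.1 h
  have hsub : u i - u' i ≠ 0 := sub_ne_zero.2 hi
  rintro ⟨t, t'⟩
  obtain ⟨m, hm⟩ := exists_polyEval_eq_affine hD i
    (fun j => t j - (t j - t' j) / (u i - u' i) * u i) fun j => (t j - t' j) / (u i - u' i)
  refine ⟨m, ?_⟩
  rw [AddMonoidHom.prod_apply, hm, hm]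
  refine Prod.ext (funext fun j => ?_) (funext fun j => ?_)
  · exact sub_add_cancel _ _
  · field_simp
    ring

/-- The polynomial in `d` variables with individual degrees less than `D` and coefficients `a`. -/
def boxPoly (a : (Fin d → Fin D) → K) : MvPolynomial (Fin d) K :=
  ∑ s, MvPolynomial.monomial (Finsupp.equivFunOnFinite.symm fun i => (s i : ℕ)) (a s)

theorem boxPoly_ne_zero {a : (Fin d → Fin D) → K} (ha : a ≠ 0) : boxPoly a ≠ 0 := by
  obtain ⟨s, hs⟩ := Function.ne_iff.1 ha
  have hinj : Function.Injective fun s : Fin d → Fin D =>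
      (Finsupp.equivFunOnFinite.symm fun i => (s i : ℕ) : Fin d →₀ ℕ) := fun s s' h =>
    funext fun i => Fin.ext (DFunLike.congr_fun h i)
  have hcoeff : (boxPoly a).coeff (Finsupp.equivFunOnFinite.symm fun i => (s i : ℕ)) = a s := by
    rw [boxPoly, MvPolynomial.coeff_sum, sum_eq_single s]
    · exact (MvPolynomial.coeff_monomial _ _ _).trans (if_pos rfl)
    · exact fun s' _ hne =>
        (MvPolynomial.coeff_monomial _ _ _).trans (if_neg fun h => hne (hinj h))
    · exact fun h => absurd (mem_univ s) h
  intro h0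
  rw [h0, MvPolynomial.coeff_zero] at hcoeff
  exact hs hcoeff.symm

theorem totalDegree_boxPoly_le (a : (Fin d → Fin D) → K) : (boxPoly a).totalDegree ≤ d * D := by
  refine MvPolynomial.totalDegree_finsetSum_le fun s _ =>
    (MvPolynomial.totalDegree_monomial_le _ _).trans ?_
  rw [Finsupp.sum_fintype _ _ fun _ => rfl]
  calc ∑ i, (s i : ℕ) ≤ ∑ _i : Fin d, D := sum_le_sum fun i _ => (s i).2.le
    _ = d * D := by simp

theorem eval_boxPoly (u : Fin d → K) (a : (Fin d → Fin D) → K) :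
    MvPolynomial.eval u (boxPoly a) = ∑ s, a s * ∏ i, u i ^ (s i : ℕ) := by
  simp [boxPoly, MvPolynomial.eval_monomial, Finsupp.prod_fintype]

theorem card_eval_eq_zero_le [Fintype K] {p : MvPolynomial (Fin d) K} (hp : p ≠ 0) :
    (#{u | MvPolynomial.eval u p = 0} : ℝ)
      ≤ p.totalDegree / Fintype.card K * (Fintype.card K : ℝ) ^ d := by
  have : (0 : ℝ) < Fintype.card K := mod_cast Fintype.card_pos
  have hsz := NNRat.cast_le (K := ℝ).2 (MvPolynomial.schwartz_zippel_totalDegree hp univ)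
  push_cast [Fintype.piFinset_univ, card_univ] at hsz
  exact (div_le_iff₀ (by positivity)).1 hsz

theorem card_polyEval_eq_le [Fintype K] {m m' : Fin e → (Fin d → Fin D) → K} (h : m ≠ m') :
    (#{u | polyEval u m = polyEval u m'} : ℝ)
      ≤ d * (D / Fintype.card K) * (Fintype.card K : ℝ) ^ d := by
  obtain ⟨j, hj⟩ := Function.ne_iff.1 h
  have hroot : ∀ u, polyEval u m = polyEval u m' →
      MvPolynomial.eval u (boxPoly (m j - m' j)) = 0 := fun u hu => by
    have := congrFun hu j
    rw [polyEval_apply, polyEval_apply, ← sub_eq_zero, ← sum_sub_distrib] at this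
    simpa only [eval_boxPoly, Pi.sub_apply, sub_mul] using this
  calc (#{u | polyEval u m = polyEval u m'} : ℝ)
      ≤ #{u | MvPolynomial.eval u (boxPoly (m j - m' j)) = 0} :=
        mod_cast card_le_card (monotone_filter_right _ fun u _ => hroot u)
    _ ≤ (boxPoly (m j - m' j)).totalDegree / Fintype.card K * (Fintype.card K : ℝ) ^ d :=
        card_eval_eq_zero_le (boxPoly_ne_zero (sub_ne_zero.2 hj))
    _ ≤ d * (D / Fintype.card K) * (Fintype.card K : ℝ) ^ d := by
        rw [← mul_div_assoc]
        gcongr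
        exact mod_cast totalDegree_boxPoly_le _

/-- The pool is `K ^ (d + e)`, the messages are the `e`-tuples of polynomials, and the pool set of
a message is its graph. -/
theorem poolServes_of_field {X Y : Type*} [Fintype X] [Fintype Y] [Fintype K] {W : X → Y → ℝ}
    (hW : IsChannel W) {P : X → ℝ} (hP : IsPMF P) {n : ℕ} (hn : 0 < n) {ε δ R : ℝ} (hε : 0 < ε)
    (hδ : 0 < δ) (hR0 : 0 < R) (hD : 1 < D)
    (hR : R ≤ (1 / n) * log (e * D ^ d * log (Fintype.card K)))
    (hinter : (d * (D / Fintype.card K) : ℝ) ≤ δ)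
    (hmiss : 8 * (Fintype.card X * Fintype.card Y) / (n * ε ^ 2) / δ ≤ 1 / 6)
    (hfalse : 2 * (e * D ^ d * log (Fintype.card K))
      + 2 * ((Fintype.card K : ℝ) ^ d) ^ 2 * (2 * exp (-(n * (mutInf P W - ε))))
      - δ * (Fintype.card K : ℝ) ^ d ≤ -2) :
    PoolServes n W P (Fin (d + e) → K) (2 * δ) R ((Fintype.card K : ℝ) ^ e)⁻¹ := by
  set M := Fin e → (Fin d → Fin D) → K
  set N := Fintype.equivFin M
  have hdesign := (isPairwiseDesign_graphFamily (Fin.appendEquiv d e).symm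
    (fun u => polyEval (e := e) (D := D) u) (polyEval_surjective (by omega))
    fun u u' h => polyEval_prod_surjective hD h).comp_equiv N.symm
  have hcardT : (Fintype.card (Fin e → K) : ℝ) = (Fintype.card K : ℝ) ^ e := by simp
  rw [hcardT] at hdesign
  have hlogM : log (Fintype.card M) = e * D ^ d * log (Fintype.card K) := by
    simp only [M, Fintype.card_fun, Fintype.card_fin, Nat.cast_pow, ← pow_mul, log_pow,
      Nat.cast_mul]
    ring
  refine poolServes_of_design hW hP hn hε hδ
    ⟨fun _ => hlogM ▸ hR, fun h => absurd h hR0.ne'⟩ hdesign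
    (b := (Fintype.card K : ℝ) ^ d) (fun m => ?_) (fun m m' hm => ?_) hmiss ?_
  · rw [card_graphFamily, Fintype.card_fun, Fintype.card_fin, Nat.cast_pow]
  · refine (Nat.cast_le.2 (card_graphFamily_inter_le _ _ _ _)).trans
      ((card_polyEval_eq_le (N.symm.injective.ne hm)).trans ?_)
    gcongr
  · have hMpos : (0 : ℝ) < Fintype.card M := mod_cast Fintype.card_pos
    rw [← exp_log (pow_pos hMpos 2), log_pow, ← exp_add, hlogM]
    calc _ ≤ exp (-2) := exp_le_exp.2 (by push_cast; linarith)
      _ ≤ 1 / 4 := by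
        rw [exp_neg, one_div, show (2 : ℝ) = 1 + 1 by norm_num, exp_add]
        exact inv_anti₀ (by norm_num) (by nlinarith [add_one_le_exp (1 : ℝ)])

end PolynomialDesign

section Asymptotics

/-- Eventually `κ n` is within a factor of two of `exp (n * θ)`; for us `κ n` is the size of the
field over which the pool for block length `n` is built. -/
def IsNearExp (κ : ℕ → ℝ) (θ : ℝ) : Prop :=
  ∀ᶠ n : ℕ in atTop, exp (n * θ) ≤ 2 * κ n ∧ κ n ≤ exp (n * θ)

theorem exists_field_card_near_exp {θ : ℝ} (hθ : 0 < θ) :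
    ∃ (K : ℕ → Type) (_ : ∀ n, Field (K n)) (_ : ∀ n, Fintype (K n)),
      IsNearExp (fun n => Fintype.card (K n)) θ := by
  have hlog2 : 0 < log 2 := log_pos one_lt_two
  set r : ℕ → ℕ := fun n => ⌊n * θ / log 2⌋₊
  refine ⟨fun n => GaloisField 2 (r n), fun n => inferInstance, fun n => Fintype.ofFinite _, ?_⟩
  filter_upwards [tendsto_natCast_atTop_atTop.eventually_ge_atTop (log 2 / θ)] with n hn
  have hr : r n ≠ 0 := (Nat.floor_pos.2 ((one_le_div hlog2).2 ((div_le_iff₀ hθ).1 hn))).ne'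
  have hcard : ((Nat.card (GaloisField 2 (r n)) : ℕ) : ℝ) = exp (r n * log 2) := by
    rw [GaloisField.card 2 (r n) hr, Nat.cast_pow, exp_nat_mul, Nat.cast_two, exp_log two_pos]
  rw [Fintype.card_eq_nat_card, hcard]
  constructor
  · have hlt := (div_lt_iff₀ hlog2).1 (Nat.lt_floor_add_one (n * θ / log 2))
    calc exp (n * θ) ≤ exp (log 2 + r n * log 2) := exp_le_exp.2 (by linarith)
      _ = 2 * exp (r n * log 2) := by rw [exp_add, exp_log two_pos]
  · exact exp_le_exp.2 ((le_div_iff₀ hlog2).1 (Nat.floor_le (by positivity)))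

variable {κ : ℕ → ℝ} {θ : ℝ}

namespace IsNearExp

theorem tendsto_atTop (h : IsNearExp κ θ) (hθ : 0 < θ) : Tendsto κ atTop atTop := by
  have hexp : Tendsto (fun n : ℕ => exp (n * θ) / 2) atTop atTop :=
    (tendsto_exp_atTop.comp (tendsto_natCast_atTop_atTop.atTop_mul_const hθ)).atTop_div_const
      two_pos
  refine tendsto_atTop_mono' _ ?_ hexp
  filter_upwards [h] with n hn
  linarith [hn.1]

theorem eventually_ceil_exp_div_le (h : IsNearExp κ θ) {r : ℝ} (hr : 0 ≤ r) :
    ∀ᶠ n : ℕ in atTop, ⌈exp (n * r)⌉₊ / κ n ≤ 4 * exp (-((θ - r) * n)) := by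
  filter_upwards [h] with n hn
  have hκ : 0 < κ n := by linarith [exp_pos (n * θ), hn.1]
  have hceil : ⌈exp (n * r)⌉₊ ≤ 2 * exp (n * r) := by
    linarith [Nat.ceil_lt_add_one (exp_nonneg (n * r)), one_le_exp (x := n * r) (by positivity)]
  rw [div_le_iff₀ hκ]
  calc (⌈exp (n * r)⌉₊ : ℝ) ≤ 2 * (exp (n * θ) * exp (-((θ - r) * n))) := by
        rwa [← exp_add, show (n : ℝ) * θ + -((θ - r) * n) = n * r by ring]
    _ ≤ 4 * exp (-((θ - r) * n)) * κ n := by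
        linarith [mul_le_mul_of_nonneg_right hn.1 (exp_nonneg (-((θ - r) * n)))]

theorem tendsto_ceil_exp_div (h : IsNearExp κ θ) {r : ℝ} (hr : 0 ≤ r) (hrθ : r < θ) :
    Tendsto (fun n : ℕ => ⌈exp (n * r)⌉₊ / κ n) atTop (𝓝 0) := by
  have hlim := (tendsto_add_one_pow_mul_exp_neg_mul 0 (sub_pos.2 hrθ)).const_mul 4
  simp only [pow_zero, one_mul, mul_zero] at hlim
  refine squeeze_zero' ?_ (h.eventually_ceil_exp_div_le hr) hlim
  filter_upwards [(h.tendsto_atTop (hr.trans_lt hrθ)).eventually_ge_atTop 0] with n hκ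
  positivity

theorem tendsto_ceil_exp_div_pow_mul_log (h : IsNearExp κ θ) {r : ℝ} (hr : 0 ≤ r) (hrθ : r < θ)
    {d : ℕ} (hd : d ≠ 0) :
    Tendsto (fun n : ℕ => (⌈exp (n * r)⌉₊ / κ n) ^ d * log (κ n)) atTop (𝓝 0) := by
  have hlim := (tendsto_add_one_pow_mul_exp_neg_mul 1 (sub_pos.2 hrθ)).const_mul (4 ^ d * θ)
  simp only [pow_one, mul_zero] at hlim
  have hlarge := (h.tendsto_atTop (hr.trans_lt hrθ)).eventually_ge_atTop 1
  refine squeeze_zero' ?_ ?_ hlim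
  · filter_upwards [hlarge] with n hκ
    have := log_nonneg hκ
    positivity
  · filter_upwards [hlarge, h.eventually_ceil_exp_div_le hr, h] with n hκ hceil hn
    set z := exp (-((θ - r) * n))
    have hz : z ≤ 1 := exp_le_one_iff.2 (by nlinarith [Nat.cast_nonneg (α := ℝ) n])
    have hlog : log (κ n) ≤ (n + 1) * θ := by
      linarith [(log_le_iff_le_exp (one_pos.trans_le hκ)).2 hn.2]
    calc (⌈exp (n * r)⌉₊ / κ n) ^ d * log (κ n) ≤ (4 * z) ^ d * ((n + 1) * θ) := by
          have := log_nonneg hκ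
          gcongr
      _ = 4 ^ d * z ^ d * ((n + 1) * θ) := by rw [mul_pow]
      _ ≤ 4 ^ d * z * ((n + 1) * θ) := by
          have := hr.trans hrθ.le
          gcongr
          exact pow_le_of_le_one (exp_nonneg _) hz hd
      _ = 4 ^ d * θ * ((n + 1) * z) := by ring

theorem tendsto_pow_mul_exp_neg (h : IsNearExp κ θ) (hθ : 0 < θ) {d : ℕ} {c : ℝ}
    (hc : d * θ < c) : Tendsto (fun n : ℕ => κ n ^ d * exp (-(n * c))) atTop (𝓝 0) := by
  have hlim := tendsto_add_one_pow_mul_exp_neg_mul 0 (sub_pos.2 hc)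
  simp only [pow_zero, one_mul] at hlim
  have hlarge := (h.tendsto_atTop hθ).eventually_ge_atTop 0
  refine squeeze_zero' ?_ ?_ hlim
  · filter_upwards [hlarge] with n hκ
    positivity
  · filter_upwards [hlarge, h] with n hκ hn
    calc κ n ^ d * exp (-(n * c)) ≤ exp (n * θ) ^ d * exp (-(n * c)) := by
          gcongr
          exact hn.2
      _ = exp (-((c - d * θ) * n)) := by
          rw [← exp_nat_mul, ← exp_add]
          ring_nf

/-- The three terms are the logarithm of the number of pairs of messages, the expected number of
collisions and the tolerated number of collisions. -/
theorem eventually_false_id_exponent_le (h : IsNearExp κ θ) (hθ : 0 < θ) {r : ℝ} (hr : 0 ≤ r)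
    (hrθ : r < θ) {d : ℕ} (hd : d ≠ 0) (e : ℕ) {c δ : ℝ} (hc : d * θ < c) (hδ : 0 < δ) :
    ∀ᶠ n : ℕ in atTop, 2 * (e * (⌈exp (n * r)⌉₊ : ℝ) ^ d * log (κ n))
      + 2 * (κ n ^ d) ^ 2 * (2 * exp (-(n * c))) - δ * κ n ^ d ≤ -2 := by
  have hmessages := (h.tendsto_ceil_exp_div_pow_mul_log hr hrθ hd).const_mul (2 * e : ℝ)
  have hcollisions := (h.tendsto_pow_mul_exp_neg hθ hc).const_mul 4
  have hpow := (tendsto_pow_atTop hd).comp (h.tendsto_atTop hθ)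
  rw [mul_zero] at hmessages hcollisions
  filter_upwards [hmessages.eventually_le_const (show 0 < δ / 4 by positivity),
    hcollisions.eventually_le_const (show 0 < δ / 4 by positivity),
    hpow.eventually_ge_atTop (4 / δ), (h.tendsto_atTop hθ).eventually_gt_atTop 0]
    with n h1 h2 h3 hκ
  have : 0 < κ n ^ d := pow_pos hκ d
  calc 2 * (e * (⌈exp (n * r)⌉₊ : ℝ) ^ d * log (κ n))
        + 2 * (κ n ^ d) ^ 2 * (2 * exp (-(n * c))) - δ * κ n ^ d
      = (2 * e * ((⌈exp (n * r)⌉₊ / κ n) ^ d * log (κ n)) + 4 * (κ n ^ d * exp (-(n * c))) - δ)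
        * κ n ^ d := by
        rw [div_pow]
        field_simp
        ring
    _ ≤ (-(δ / 2)) * κ n ^ d := by
        gcongr
        linarith
    _ ≤ -2 := by
        have hlarge : 4 / δ ≤ κ n ^ d := h3
        linarith [(div_le_iff₀' hδ).1 hlarge]

end IsNearExp

theorem tendsto_const_div_natCast_mul (a b c : ℝ) :
    Tendsto (fun n : ℕ => a / (n * b) / c) atTop (𝓝 0) := by
  have hlim := tendsto_const_div_atTop_nhds_zero_nat (a / b / c)
  refine hlim.congr fun n => ?_
  simp only [div_div]
  ring_nf

variable {X Y : Type*} [Fintype X] [Fintype Y] {W : X → Y → ℝ} {P : X → ℝ} {K : ℕ → Type*}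
  [∀ n, Field (K n)] [∀ n, Fintype (K n)] {δ R : ℝ} {d : ℕ}

theorem eventually_poolServes (hW : IsChannel W) (hP : IsPMF P) (hθ : 0 < θ)
    (hK : IsNearExp (fun n => Fintype.card (K n)) θ) {e : ℕ} (he : 0 < e) (hδ : 0 < δ)
    (hR0 : 0 < R) (hR : R < d * θ) (hI : d * θ < mutInf P W) :
    ∀ᶠ n : ℕ in atTop,
      PoolServes n W P (Fin (d + e) → K n) δ R ((Fintype.card (K n) : ℝ) ^ e)⁻¹ := by
  have hd : (0 : ℝ) < d := pos_of_mul_pos_left (hR0.trans hR) hθ.le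
  have hd0 : d ≠ 0 := mod_cast hd.ne'
  have hr : 0 < R / d := div_pos hR0 hd
  have hrθ : R / d < θ := (div_lt_iff₀' hd).2 hR
  set ε := (mutInf P W - d * θ) / 2 with hε
  have hε0 : 0 < ε := by linarith
  have hinter := (hK.tendsto_ceil_exp_div hr.le hrθ).const_mul (d : ℝ)
  rw [mul_zero] at hinter
  filter_upwards [hinter.eventually_le_const (half_pos hδ),
    (tendsto_const_div_natCast_mul (8 * (Fintype.card X * Fintype.card Y)) (ε ^ 2)
      (δ / 2)).eventually_le_const (show (0 : ℝ) < 1 / 6 by norm_num),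
    hK.eventually_false_id_exponent_le hθ hr.le hrθ hd0 e
      (show d * θ < mutInf P W - ε by linarith) (half_pos hδ),
    (tendsto_log_atTop.comp (hK.tendsto_atTop hθ)).eventually_ge_atTop 1,
    eventually_gt_atTop 0] with n hinter hmiss hfalse hlog hn
  have hn' : (0 : ℝ) < n := mod_cast hn
  have hceil : exp (n * (R / d)) ≤ ⌈exp (n * (R / d))⌉₊ := Nat.le_ceil _
  have hrate : R ≤ (1 / n) * log (e * ⌈exp (n * (R / d))⌉₊ ^ d * log (Fintype.card (K n))) := by
    have he1 : (1 : ℝ) ≤ e := mod_cast he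
    rw [one_div, le_inv_mul_iff₀ hn', le_log_iff_exp_le (by positivity)]
    calc exp (n * R) = exp (n * (R / d)) ^ d := by
          rw [← exp_nat_mul]
          field_simp
      _ ≤ ⌈exp (n * (R / d))⌉₊ ^ d := by gcongr
      _ ≤ e * ⌈exp (n * (R / d))⌉₊ ^ d := le_mul_of_one_le_left (by positivity) he1
      _ ≤ _ := le_mul_of_one_le_right (by positivity) hlog
  rw [← mul_div_cancel₀ δ (two_ne_zero' ℝ)]
  exact poolServes_of_field hW hP hn hε0 (half_pos hδ) hR0
    (mod_cast (one_lt_exp_iff.2 (by positivity)).trans_le hceil) hrate hinter hmiss hfalse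

/-- A receiver of information `I` demands the rate `R` and is served the rate `S` from a pool of
rate `r`; a receiver demanding nothing is served the whole pool. -/
def ServedRate (R I S r : ℝ) : Prop := R = 0 ∧ S = r ∨ 0 < R ∧ R < S ∧ S < I ∧ S < r

theorem eventually_poolServes_of_servedRate (hW : IsChannel W) (hP : IsPMF P) (hθ : 0 < θ)
    (hK : IsNearExp (fun n => Fintype.card (K n)) θ) {α : ℕ} (hδ : 0 < δ)
    (h : ServedRate R (mutInf P W) (d * θ) (α * θ)) :
    ∀ᶠ n : ℕ in atTop,
      PoolServes n W P (Fin α → K n) δ R ((Fintype.card (K n) : ℝ) ^ (α - d))⁻¹ := by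
  rcases h with ⟨rfl, hd⟩ | ⟨hR0, hR, hI, hd⟩
  · obtain rfl : d = α := Nat.cast_injective (mul_right_cancel₀ hθ.ne' hd)
    refine Eventually.of_forall fun n => ?_
    simpa only [tsub_self, pow_zero, inv_one] using poolServes_zero n (Fin d → K n) hδ.le
  · replace hd : d < α := Nat.cast_lt.1 (lt_of_mul_lt_mul_right hd hθ.le)
    obtain ⟨e, rfl⟩ := Nat.exists_eq_add_of_le hd.le
    rw [Nat.add_sub_cancel_left]
    exact eventually_poolServes hW hP hθ hK (Nat.lt_add_right_iff_pos.1 hd) hδ hR0 hR hI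

end Asymptotics

section Achievability

variable {R I S r : ℝ}

theorem ServedRate.nonneg (h : ServedRate R I S r) : 0 ≤ R :=
  h.elim (fun h => h.1.ge) fun h => h.1.le

theorem ServedRate.le (h : ServedRate R I S r) : S ≤ r :=
  h.elim (fun h => h.2.le) fun h => h.2.2.2.le

theorem ServedRate.eventually_floor (h : ServedRate R I S r) :
    ∀ᶠ j : ℕ in atTop, ServedRate R I (⌊S * j⌋₊ * (j : ℝ)⁻¹) (⌊r * j⌋₊ * (j : ℝ)⁻¹) := by
  rcases h with ⟨rfl, rfl⟩ | ⟨hR, hRS, hSI, hSr⟩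
  · exact Eventually.of_forall fun j => .inl ⟨rfl, rfl⟩
  have hlim : ∀ {x : ℝ}, 0 ≤ x → Tendsto (fun j : ℕ => ⌊x * j⌋₊ * (j : ℝ)⁻¹) atTop (𝓝 x) :=
    fun hx => (tendsto_nat_floor_mul_div_atTop hx).comp tendsto_natCast_atTop_atTop
  have hS : 0 ≤ S := (hR.trans hRS).le
  filter_upwards [(hlim hS).eventually_const_lt hRS, (hlim hS).eventually_lt_const hSI,
    (hlim hS).eventually_lt (hlim (hS.trans hSr.le)) hSr] with j h1 h2 h3
  exact .inr ⟨hR, h1, h2, h3⟩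

theorem IDCodeErr.mono {X Y M : Type*} [Fintype X] [Fintype Y] {n : ℕ} {W : X → Y → ℝ}
    {Q : M → (Fin n → X) → ℝ} {D : M → Finset (Fin n → Y)} {a b a' b' : ℝ}
    (h : IDCodeErr n W Q D a b) (ha : a ≤ a') (hb : b ≤ b') : IDCodeErr n W Q D a' b' :=
  ⟨fun m => (h.1 m).trans ha, fun m m' hm => (h.2 m m' hm).trans hb⟩

theorem IsBC3IDCode.mono {X Y1 Y2 Y3 : Type*} [Fintype X] [Fintype Y1] [Fintype Y2] [Fintype Y3]
    {n k1 k2 k3 : ℕ} {W : X → Y1 → Y2 → Y3 → ℝ} {Q : Fin k1 → Fin k2 → Fin k3 → (Fin n → X) → ℝ}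
    {D1 : Fin k1 → Finset (Fin n → Y1)} {D2 : Fin k2 → Finset (Fin n → Y2)}
    {D3 : Fin k3 → Finset (Fin n → Y3)} {l l11 l21 l12 l22 l13 l23 : ℝ}
    (h : IsBC3IDCode n k1 k2 k3 W Q D1 D2 D3 l l l l l l) (h11 : l ≤ l11) (h21 : l ≤ l21)
    (h12 : l ≤ l12) (h22 : l ≤ l22) (h13 : l ≤ l13) (h23 : l ≤ l23) :
    IsBC3IDCode n k1 k2 k3 W Q D1 D2 D3 l11 l21 l12 l22 l13 l23 :=
  ⟨h.1, h.2.1.mono h11 h21, h.2.2.1.mono h12 h22, h.2.2.2.mono h13 h23⟩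

theorem le_inv_pow_mul_inv_pow_mul_inv_pow_mul_pow {κ : ℝ} (hκ : 1 ≤ κ) {α d1 d2 d3 : ℕ}
    (h1 : d1 ≤ α) (h2 : d2 ≤ α) (h3 : d3 ≤ α) (hd : 2 * α < d1 + d2 + d3) :
    κ ≤ (κ ^ (α - d1))⁻¹ * (κ ^ (α - d2))⁻¹ * (κ ^ (α - d3))⁻¹ * κ ^ α := by
  rw [← mul_inv, ← mul_inv, le_inv_mul_iff₀ (by positivity), ← pow_add, ← pow_add, ← pow_succ]
  exact pow_le_pow_right₀ hκ (by omega)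

variable {X Y1 Y2 Y3 : Type*} [Fintype X] [Fintype Y1] [Fintype Y2] [Fintype Y3]
  {W : X → Y1 → Y2 → Y3 → ℝ} {P : X → ℝ} {R1 R2 R3 : ℝ}

theorem bc3Achievable_of_dimensions (hW : IsBC3 W) (hP : IsPMF P) {θ : ℝ} (hθ : 0 < θ)
    {α d1 d2 d3 : ℕ} (h1 : ServedRate R1 (mutInf P (marg1 W)) (d1 * θ) (α * θ))
    (h2 : ServedRate R2 (mutInf P (marg2 W)) (d2 * θ) (α * θ))
    (h3 : ServedRate R3 (mutInf P (marg3 W)) (d3 * θ) (α * θ))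
    (hd : 2 * α < d1 + d2 + d3) : BC3Achievable W (R1, R2, R3) := by
  refine ⟨h1.nonneg, h2.nonneg, h3.nonneg,
    fun l11 l21 l12 l22 l13 l23 p11 p21 p12 p22 p13 p23 => eventually_atTop.1 ?_⟩
  obtain ⟨l, hl, h11, h21, h12, h22, h13, h23⟩ : ∃ l, 0 < l ∧ l ≤ l11 ∧ l ≤ l21 ∧ l ≤ l12 ∧
      l ≤ l22 ∧ l ≤ l13 ∧ l ≤ l23 :=
    ⟨min (min (min l11 l21) (min l12 l22)) (min l13 l23), by simp [*], by simp⟩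
  obtain ⟨K, _, _, hK⟩ := exists_field_card_near_exp hθ
  have hδ : 0 < l / 4 := by positivity
  have dim_le : ∀ {d : ℕ}, d * θ ≤ α * θ → d ≤ α := fun h =>
    Nat.cast_le.1 (le_of_mul_le_mul_right h hθ)
  filter_upwards [eventually_poolServes_of_servedRate hW.isChannel_marg1 hP hθ hK hδ h1,
    eventually_poolServes_of_servedRate hW.isChannel_marg2 hP hθ hK hδ h2,
    eventually_poolServes_of_servedRate hW.isChannel_marg3 hP hθ hK hδ h3,
    (hK.tendsto_atTop hθ).eventually_ge_atTop (8 / l)] with n s1 s2 s3 hlarge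
  have hκ : (1 : ℝ) ≤ Fintype.card (K n) := mod_cast Fintype.card_pos (α := K n)
  have hpool := le_inv_pow_mul_inv_pow_mul_inv_pow_mul_pow hκ (dim_le h1.le) (dim_le h2.le)
    (dim_le h3.le) hd
  have hcard : (Fintype.card (Fin α → K n) : ℝ) = (Fintype.card (K n) : ℝ) ^ α := by
    simp only [Fintype.card_pi_const, Nat.cast_pow]
  rw [← hcard] at hpool
  obtain ⟨k1, k2, k3, Q, D1, D2, D3, hcode, hrates⟩ :=
    exists_bc3Code_of_poolServes hW hP s1 s2 s3 (l := l) <| calc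
      _ ≤ 2 * (l / 4) + 4 / (8 / l) := by
          gcongr
          exact hlarge.trans hpool
      _ = l := by
          field_simp
          norm_num
  exact ⟨k1, k2, k3, Q, D1, D2, D3, hcode.mono h11 h21 h12 h22 h13 h23, hrates⟩

theorem bc3Achievable_of_servedRate (hW : IsBC3 W) (hP : IsPMF P) {S1 S2 S3 : ℝ} (hr : 0 ≤ r)
    (h1 : ServedRate R1 (mutInf P (marg1 W)) S1 r) (h2 : ServedRate R2 (mutInf P (marg2 W)) S2 r)
    (h3 : ServedRate R3 (mutInf P (marg3 W)) S3 r) (hs : 2 * r < S1 + S2 + S3) :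
    BC3Achievable W (R1, R2, R3) := by
  have hlarge : ∀ᶠ j : ℕ in atTop, 3 ≤ (S1 + S2 + S3 - 2 * r) * j :=
    (tendsto_natCast_atTop_atTop.const_mul_atTop (sub_pos.2 hs)).eventually_ge_atTop 3
  obtain ⟨j, f1, f2, f3, hj, hj0⟩ := (h1.eventually_floor.and <| h2.eventually_floor.and <|
    h3.eventually_floor.and <| hlarge.and <| eventually_gt_atTop 0).exists
  have hθ : (0 : ℝ) < (j : ℝ)⁻¹ := inv_pos.2 (mod_cast hj0)
  refine bc3Achievable_of_dimensions hW hP hθ f1 f2 f3 ?_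
  have hfloor : (2 * ⌊r * j⌋₊ : ℝ) < ⌊S1 * j⌋₊ + ⌊S2 * j⌋₊ + ⌊S3 * j⌋₊ := by
    linarith [Nat.lt_floor_add_one (S1 * j), Nat.lt_floor_add_one (S2 * j),
      Nat.lt_floor_add_one (S3 * j), Nat.floor_le (show 0 ≤ r * j by positivity)]
  exact_mod_cast hfloor

end Achievability

section Region

theorem sub_mul_sq_lt_add {η x y z : ℝ} (hη : 0 < η) (hy : 0 < y) (hz : 0 < z) (hxyz : x ≤ y + z)
    (hsum : η * (x + y + z) ≤ 1) : x - η * x ^ 2 < (y - η * y ^ 2) + (z - η * z ^ 2) := by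
  have hslack : 0 ≤ (y + z - x) * (1 - η * (x + y + z)) :=
    mul_nonneg (sub_nonneg.2 hxyz) (sub_nonneg.2 hsum)
  have hcross : 0 < η * (y * z) := by positivity
  linear_combination hslack + 2 * hcross

variable {R1 R2 R3 I1 I2 I3 : ℝ}

/-- The concave map `x ↦ x - η x²` makes the triangle inequalities strict. -/
theorem exists_lt_and_lt_add (i1 : 0 < I1) (i2 : 0 < I2) (i3 : 0 < I3) (h1 : R1 < I1)
    (h2 : R2 < I2) (h3 : R3 < I3) (t1 : I1 ≤ I2 + I3) (t2 : I2 ≤ I1 + I3) (t3 : I3 ≤ I1 + I2) :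
    ∃ S1 S2 S3, (R1 < S1 ∧ S1 < I1) ∧ (R2 < S2 ∧ S2 < I2) ∧ (R3 < S3 ∧ S3 < I3) ∧
      S1 < S2 + S3 ∧ S2 < S1 + S3 ∧ S3 < S1 + S2 := by
  have hlim : ∀ x : ℝ, Tendsto (fun η => x - η * x ^ 2) (𝓝[>] 0) (𝓝 x) := fun x =>
    tendsto_nhdsWithin_of_tendsto_nhds (Continuous.tendsto' (by fun_prop) 0 x (by simp))
  have hsum : Tendsto (fun η => η * (I1 + I2 + I3)) (𝓝[>] 0) (𝓝 0) :=
    tendsto_nhdsWithin_of_tendsto_nhds (Continuous.tendsto' (by fun_prop) 0 0 (zero_mul _))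
  obtain ⟨η, r1, r2, r3, hη1, hη⟩ := ((hlim I1).eventually_const_lt h1 |>.and <|
    (hlim I2).eventually_const_lt h2 |>.and <| (hlim I3).eventually_const_lt h3 |>.and <|
    hsum.eventually_le_const one_pos |>.and self_mem_nhdsWithin).exists
  have lt_self : ∀ {x : ℝ}, 0 < x → x - η * x ^ 2 < x := fun hx =>
    sub_lt_self _ (mul_pos hη (pow_pos hx 2))
  exact ⟨_, _, _, ⟨r1, lt_self i1⟩, ⟨r2, lt_self i2⟩, ⟨r3, lt_self i3⟩,
    sub_mul_sq_lt_add hη i2 i3 t1 hη1, sub_mul_sq_lt_add hη i1 i3 t2 (by linarith),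
    sub_mul_sq_lt_add hη i1 i2 t3 (by linarith)⟩

theorem exists_servedRate_of_pos (p1 : 0 < R1) (p2 : 0 < R2) (p3 : 0 < R3) (h1 : R1 < I1)
    (h2 : R2 < I2) (h3 : R3 < I3) (t1 : I1 ≤ I2 + I3) (t2 : I2 ≤ I1 + I3) (t3 : I3 ≤ I1 + I2) :
    ∃ r S1 S2 S3, 0 ≤ r ∧ ServedRate R1 I1 S1 r ∧ ServedRate R2 I2 S2 r ∧
      ServedRate R3 I3 S3 r ∧ 2 * r < S1 + S2 + S3 := by
  obtain ⟨S1, S2, S3, ⟨l1, u1⟩, ⟨l2, u2⟩, ⟨l3, u3⟩, s1, s2, s3⟩ := exists_lt_and_lt_add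
    (p1.trans h1) (p2.trans h2) (p3.trans h3) h1 h2 h3 t1 t2 t3
  obtain ⟨r, hr, hr'⟩ := exists_between (show max (max S1 S2) S3 < (S1 + S2 + S3) / 2 from
    max_lt (max_lt (by linarith) (by linarith)) (by linarith))
  simp only [max_lt_iff] at hr
  exact ⟨r, S1, S2, S3, by linarith, .inr ⟨p1, l1, u1, hr.1.1⟩, .inr ⟨p2, l2, u2, hr.1.2⟩,
    .inr ⟨p3, l3, u3, hr.2⟩, by linarith⟩

theorem exists_servedRate_pair {R R' I : ℝ} (hR : 0 < R) (hR' : 0 < R') (h : R < I)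
    (h' : R' < I) :
    ∃ r s, 0 ≤ r ∧ ServedRate R I s r ∧ ServedRate R' I s r ∧ r < 2 * s := by
  obtain ⟨s, hs, hsI⟩ := exists_between (max_lt h h')
  rw [max_lt_iff] at hs
  exact ⟨3 / 2 * s, s, by linarith, .inr ⟨hR, hs.1, hsI, by linarith⟩,
    .inr ⟨hR', hs.2, hsI, by linarith⟩, by linarith⟩

theorem exists_servedRate (h1 : I1 = 0 ∧ R1 = 0 ∨ 0 < R1 ∧ R1 < I1)
    (h2 : I2 = 0 ∧ R2 = 0 ∨ 0 < R2 ∧ R2 < I2) (h3 : I3 = 0 ∧ R3 = 0 ∨ 0 < R3 ∧ R3 < I3)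
    (t1 : I1 ≤ I2 + I3) (t2 : I2 ≤ I1 + I3) (t3 : I3 ≤ I1 + I2) :
    ∃ r S1 S2 S3, 0 ≤ r ∧ ServedRate R1 I1 S1 r ∧ ServedRate R2 I2 S2 r ∧
      ServedRate R3 I3 S3 r ∧ 2 * r < S1 + S2 + S3 := by
  rcases h1 with ⟨rfl, rfl⟩ | ⟨p1, q1⟩ <;> rcases h2 with ⟨rfl, rfl⟩ | ⟨p2, q2⟩ <;>
    rcases h3 with ⟨rfl, rfl⟩ | ⟨p3, q3⟩
  · exact ⟨1, 1, 1, 1, zero_le_one, .inl ⟨rfl, rfl⟩, .inl ⟨rfl, rfl⟩, .inl ⟨rfl, rfl⟩, by norm_num⟩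
  · linarith
  · linarith
  · obtain rfl : I2 = I3 := by linarith
    obtain ⟨r, s, hr, s2, s3, hs⟩ := exists_servedRate_pair p2 p3 q2 q3
    exact ⟨r, r, s, s, hr, .inl ⟨rfl, rfl⟩, s2, s3, by linarith⟩
  · linarith
  · obtain rfl : I1 = I3 := by linarith
    obtain ⟨r, s, hr, s1, s3, hs⟩ := exists_servedRate_pair p1 p3 q1 q3
    exact ⟨r, s, r, s, hr, s1, .inl ⟨rfl, rfl⟩, s3, by linarith⟩
  · obtain rfl : I1 = I2 := by linarith
    obtain ⟨r, s, hr, s1, s2, hs⟩ := exists_servedRate_pair p1 p2 q1 q2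
    exact ⟨r, s, s, r, hr, s1, s2, .inl ⟨rfl, rfl⟩, by linarith⟩
  · exact exists_servedRate_of_pos p1 p2 p3 q1 q2 q3 t1 t2 t3

open scoped Pointwise in
theorem isClosed_lowerClosure_of_isCompact {G : Type*} [AddCommGroup G] [PartialOrder G]
    [IsOrderedAddMonoid G] [TopologicalSpace G] [IsTopologicalAddGroup G] [ClosedIicTopology G]
    {s : Set G} (hs : IsCompact s) : IsClosed (lowerClosure s : Set G) := by
  have h := add_lowerClosure s 0
  rw [add_zero, ← Set.singleton_zero, lowerClosure_singleton, LowerSet.coe_Iic] at h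
  exact h ▸ isClosed_Iic.add_left_of_isCompact hs

theorem combo_half_eq_zero_or_pos_and_lt {t x I : ℝ} (ht : t ∈ Set.Ioo 0 1) (hx : 0 ≤ x)
    (hxI : x ≤ I) :
    I = 0 ∧ (1 - t) * x + t * (I / 2) = 0 ∨
      0 < (1 - t) * x + t * (I / 2) ∧ (1 - t) * x + t * (I / 2) < I := by
  rcases (hx.trans hxI).eq_or_lt with rfl | hI
  · obtain rfl : x = 0 := le_antisymm hxI hx
    simp
  · have hpos := mul_pos ht.1 hI
    have hnonneg := mul_nonneg (sub_pos.2 ht.2).le hx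
    have hle := mul_le_mul_of_nonneg_left hxI (sub_pos.2 ht.2).le
    exact .inr ⟨by linarith, by linarith⟩

variable {X Y1 Y2 Y3 : Type*} [Fintype X] [Fintype Y1] [Fintype Y2] [Fintype Y3]
  {W : X → Y1 → Y2 → Y3 → ℝ} {P : X → ℝ} {p : ℝ × ℝ × ℝ}

/-- The triple of mutual informations that an input law `P` offers to the three receivers. -/
def mutInfTriple (W : X → Y1 → Y2 → Y3 → ℝ) (P : X → ℝ) : ℝ × ℝ × ℝ :=
  (mutInf P (marg1 W), mutInf P (marg2 W), mutInf P (marg3 W))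

theorem isClosed_lowerClosure_mutInfTriple (hW : IsBC3 W) :
    IsClosed (lowerClosure (mutInfTriple W '' {P | IsPMF P}) : Set (ℝ × ℝ × ℝ)) :=
  isClosed_lowerClosure_of_isCompact <| (isCompact_setOf_isPMF X).image_of_continuousOn <|
    (continuousOn_mutInf hW.isChannel_marg1).prodMk <|
      (continuousOn_mutInf hW.isChannel_marg2).prodMk (continuousOn_mutInf hW.isChannel_marg3)

theorem BC3Achievable.mem_lowerClosure_mutInfTriple (hW : IsBC3 W) (hp : BC3Achievable W p) :
    p ∈ lowerClosure (mutInfTriple W '' {P | IsPMF P}) := by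
  have hlim : Tendsto (fun ε : ℝ => p - (ε, ε, ε)) (𝓝[>] 0) (𝓝 p) :=
    tendsto_nhdsWithin_of_tendsto_nhds (Continuous.tendsto' (by fun_prop) 0 p (sub_zero p))
  refine (isClosed_lowerClosure_mutInfTriple hW).mem_of_tendsto hlim ?_
  filter_upwards [self_mem_nhdsWithin] with ε hε
  obtain ⟨P, hP, h1, h2, h3⟩ := hp.exists_mutInf_ge hW hε
  exact ⟨_, ⟨P, hP, rfl⟩, h1, h2, h3⟩

theorem exists_mutInf_ge_of_mem_closure (hW : IsBC3 W)
    (hp : p ∈ closure {p : ℝ × ℝ × ℝ | BC3Achievable W p}) :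
    ∃ P : X → ℝ, IsPMF P ∧ p.1 ≤ mutInf P (marg1 W) ∧ p.2.1 ≤ mutInf P (marg2 W) ∧
      p.2.2 ≤ mutInf P (marg3 W) := by
  obtain ⟨_, ⟨P, hP, rfl⟩, h1, h2, h3⟩ := closure_minimal
    (fun _ => BC3Achievable.mem_lowerClosure_mutInfTriple hW)
    (isClosed_lowerClosure_mutInfTriple hW) hp
  exact ⟨P, hP, h1, h2, h3⟩

theorem mem_closure_bc3Achievable (hW : IsBC3 W) (hP : IsPMF P)
    (hcap : 2 * max (max (mutInf P (marg1 W)) (mutInf P (marg2 W))) (mutInf P (marg3 W))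
      ≤ mutInf P (marg1 W) + mutInf P (marg2 W) + mutInf P (marg3 W))
    (n1 : 0 ≤ p.1) (n2 : 0 ≤ p.2.1) (n3 : 0 ≤ p.2.2) (h1 : p.1 ≤ mutInf P (marg1 W))
    (h2 : p.2.1 ≤ mutInf P (marg2 W)) (h3 : p.2.2 ≤ mutInf P (marg3 W)) :
    p ∈ closure {p : ℝ × ℝ × ℝ | BC3Achievable W p} := by
  set I1 := mutInf P (marg1 W)
  set I2 := mutInf P (marg2 W)
  set I3 := mutInf P (marg3 W)
  have htriangle := (le_div_iff₀' two_pos).2 hcap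
  rw [max_le_iff, max_le_iff] at htriangle
  obtain ⟨⟨t1, t2⟩, t3⟩ := htriangle
  have hlim : Tendsto (fun t : ℝ => ((1 - t) * p.1 + t * (I1 / 2),
      (1 - t) * p.2.1 + t * (I2 / 2), (1 - t) * p.2.2 + t * (I3 / 2))) (𝓝[>] 0) (𝓝 p) :=
    tendsto_nhdsWithin_of_tendsto_nhds (Continuous.tendsto' (by fun_prop) 0 p (by simp))
  refine mem_closure_of_tendsto hlim ?_
  filter_upwards [Ioo_mem_nhdsGT (zero_lt_one' ℝ)] with t ht
  obtain ⟨r, S1, S2, S3, hr, s1, s2, s3, hs⟩ := exists_servedRate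
    (combo_half_eq_zero_or_pos_and_lt ht n1 h1) (combo_half_eq_zero_or_pos_and_lt ht n2 h2)
    (combo_half_eq_zero_or_pos_and_lt ht n3 h3) (by linarith) (by linarith) (by linarith)
  exact bc3Achievable_of_servedRate hW hP hr s1 s2 s3 hs

end Region

/-- **Remark 4.** If no receiver is "much more capable" than the
other two, the ID capacity region of the three-receiver BC is the set of rate
triples dominated, for some input PMF `P`, by the three mutual informations. -/
theorem bc3_id_capacity_region_no_much_more_capable
    {X Y1 Y2 Y3 : Type} [Fintype X] [Fintype Y1] [Fintype Y2] [Fintype Y3]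
    [Nonempty X] [Nonempty Y1] [Nonempty Y2] [Nonempty Y3]
    (W : X → Y1 → Y2 → Y3 → ℝ) (hW : IsBC3 W)
    (hcap : ∀ P : X → ℝ, IsPMF P →
      2 * max (max (mutInf P (marg1 W)) (mutInf P (marg2 W))) (mutInf P (marg3 W))
        ≤ mutInf P (marg1 W) + mutInf P (marg2 W) + mutInf P (marg3 W)) :
    closure {p : ℝ × ℝ × ℝ | BC3Achievable W p}
      = {p : ℝ × ℝ × ℝ | 0 ≤ p.1 ∧ 0 ≤ p.2.1 ∧ 0 ≤ p.2.2 ∧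
          ∃ P : X → ℝ, IsPMF P ∧
            p.1 ≤ mutInf P (marg1 W) ∧
            p.2.1 ≤ mutInf P (marg2 W) ∧
            p.2.2 ≤ mutInf P (marg3 W)} := by
  ext p
  constructor
  · intro hp
    have hsub : {p : ℝ × ℝ × ℝ | BC3Achievable W p} ⊆ Set.Ici 0 := fun q hq =>
      show 0 ≤ q from ⟨hq.1, hq.2.1, hq.2.2.1⟩
    obtain ⟨h1, h2, h3⟩ := closure_minimal hsub isClosed_Ici hp
    exact ⟨h1, h2, h3, exists_mutInf_ge_of_mem_closure hW hp⟩
  · rintro ⟨n1, n2, n3, P, hP, h1, h2, h3⟩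
    exact mem_closure_bc3Achievable hW hP (hcap P hP) n1 n2 n3 h1 h2 h3
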